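/- arXiv:2407.12713 — 3 statements merged into one kernel-verified Lean document; each statement's English description precedes it below -/
import Mathlib

section
/- Let q be a prime power, n ≥ 1, and let G = GU_n(q) be the group of isometries of a nondegenerate Hermitian form on F_{q^2}^n. Let η be a complex representation of G whose character satisfies χ^η(g) = (−1)^n·(−q)^{dim ker(g−1)} for all g ∈ G (the Weil representation of GU_n(q)). Let K be the tensor product Markov chain on Irr(G) associated to η, started at the trivial representation 𝟙, and let π be the Plancherel measure. Then for every positive integer c and r = n + c, one has ‖K^r_𝟙 − π‖_TV ≤ 0.7·q^{−c}. -/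
open CategoryTheory MonoidalCategory Finset

noncomputable section

/-- The multiplicity of the irreducible representation `ρ` in a finite-dimensional
representation `W`: the dimension of the space of `G`-equivariant maps `ρ ⟶ W`
(by Schur's lemma this equals the multiplicity of `ρ` in a decomposition of `W`
into irreducibles). -/
def multIn {G : Type} [Monoid G] (ρ W : FDRep ℂ G) : ℕ :=
  Module.finrank ℂ (ρ ⟶ W)

/-- The transition matrix of the tensor product Markov chain on (an index set `ι` for)
the irreducible representations of `G` associated with a fixed representation `η`:
`K(λ,ρ) = m_ρ(λ⊗η)·d_ρ/(d_λ·d_η)`. -/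
def tensorChain {G : Type} [Monoid G] {ι : Type} (rep : ι → FDRep ℂ G) (η : FDRep ℂ G) :
    Matrix ι ι ℝ := fun l r =>
  (multIn (rep r) (MonoidalCategory.tensorObj (rep l) η) * Module.finrank ℂ (rep r) : ℝ) /
    (Module.finrank ℂ (rep l) * Module.finrank ℂ η)

/-- The Plancherel measure `π(ρ) = d_ρ²/|G|` on the irreducible representations of `G`. -/
def plancherel {G : Type} [Monoid G] [Fintype G] {ι : Type} (rep : ι → FDRep ℂ G) (i : ι) :
    ℝ :=
  (Module.finrank ℂ (rep i) : ℝ) ^ 2 / (Fintype.card G : ℝ)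

/-- The total variation distance between two probability distributions on a finite set:
`‖P − Q‖_TV = (1/2)·Σ_x |P x − Q x|`. -/
def tvDist {X : Type*} [Fintype X] (P Q : X → ℝ) : ℝ :=
  (1 / 2) * ∑ x, |P x - Q x|

/-- The subgroup of `GL_m(E)` consisting of the invertible matrices preserving the
form `B` on `E^m`. -/
def formIsometry {E : Type} [Field E] {m : ℕ} (B : (Fin m → E) → (Fin m → E) → E) :
    Subgroup (Matrix (Fin m) (Fin m) E)ˣ where
  carrier := {g | ∀ x y, B ((g : Matrix (Fin m) (Fin m) E).mulVec x)
    ((g : Matrix (Fin m) (Fin m) E).mulVec y) = B x y}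
  one_mem' := by
    intro x y
    simp [Matrix.one_mulVec]
  mul_mem' := by
    intro a b ha hb x y
    simp only [Units.val_mul, ← Matrix.mulVec_mulVec]
    rw [ha, hb]
  inv_mem' := by
    intro g hg x y
    have := hg ((g⁻¹ : (Matrix (Fin m) (Fin m) E)ˣ).val.mulVec x)
      ((g⁻¹ : (Matrix (Fin m) (Fin m) E)ˣ).val.mulVec y)
    rw [Matrix.mulVec_mulVec, Matrix.mulVec_mulVec, ← Units.val_mul, mul_inv_cancel,
      Units.val_one, Matrix.one_mulVec, Matrix.one_mulVec] at this
    exact this.symm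

instance {E : Type} [Field E] [Fintype E] {m : ℕ}
    (B : (Fin m → E) → (Fin m → E) → E) : Fintype ↥(formIsometry B) :=
  Fintype.ofFinite _

/-- The dimension of the fixed space `ker(g−1)` of `g ∈ GL_m(E)` acting on `E^m`. -/
def fixdim {E : Type} [Field E] {m : ℕ} (g : (Matrix (Fin m) (Fin m) E)ˣ) : ℕ :=
  Module.finrank E (LinearMap.ker (Matrix.toLin' ((g : Matrix (Fin m) (Fin m) E) - 1)))

/-!
Cauchy–Schwarz against the dimensions of the irreducibles, followed by Bessel's inequality for
their characters, gives `4 ‖K^r_𝟙 − π‖²_TV ≤ ∑_{g ≠ 1} (|χ_η(g)| / d_η)^{2r}`, and here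
`|χ_η(g)| / d_η = q^{-k}` with `k = rank (g - 1)`. An isometry `g` is determined by the space
`range (g - 1)` together with its Wall form `ψ` there. Since `ψ(u, v) + ψ(v, u)^q = -B(u, v)`, at
most `q^{k²}` isometries share a given space of dimension `k`. Counting pairs of an isometry and a
basis of `range (g - 1)` then bounds the number of isometries with `rank (g - 1) = k` by
`(4/3)^k q^{2nk - k²}`, and with `r = n + c` the sum is dominated by a geometric series of total
`q^{-2c}`.
-/

section Unitarization

open Matrix
open scoped ComplexOrder

variable {𝕜 : Type*} [RCLike 𝕜] {m G : Type*} [Fintype m] [DecidableEq m] [Group G] [Finite G]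

lemma exists_posDef_conjTranspose_mul_mul_eq (R : G →* Matrix m m 𝕜) :
    ∃ P : Matrix m m 𝕜, P.PosDef ∧ ∀ g, (R g)ᴴ * P * R g = P := by
  classical
  have := Fintype.ofFinite G
  refine ⟨∑ h, (R h)ᴴ * R h, ?_, fun g => ?_⟩
  · rw [← Finset.add_sum_erase _ _ (mem_univ (1 : G)), map_one, conjTranspose_one, mul_one]
    exact PosDef.one.add_posSemidef
      (posSemidef_sum _ fun h _ => posSemidef_conjTranspose_mul_self _)
  · simp only [Finset.mul_sum, Finset.sum_mul]
    refine Fintype.sum_equiv (Equiv.mulRight g) _ _ fun h => ?_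
    simp [Matrix.mul_assoc]

lemma trace_map_inv_eq_star (R : G →* Matrix m m 𝕜) (g : G) :
    (R g⁻¹).trace = star (R g).trace := by
  obtain ⟨P, hP, hinv⟩ := exists_posDef_conjTranspose_mul_mul_eq R
  have hdet : IsUnit P.det := (isUnit_iff_isUnit_det _).1 hP.isUnit
  have hconj : (R g)ᴴ * P = P * R g⁻¹ := by
    calc (R g)ᴴ * P = (R g)ᴴ * P * (R g * R g⁻¹) := by rw [← map_mul]; simp
      _ = P * R g⁻¹ := by rw [← Matrix.mul_assoc, hinv]
  calc (R g⁻¹).trace = (P⁻¹ * (P * R g⁻¹)).trace := by rw [nonsing_inv_mul_cancel_left _ _ hdet]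
    _ = ((R g)ᴴ * (P * P⁻¹)).trace := by rw [← hconj, trace_mul_comm, Matrix.mul_assoc]
    _ = star (R g).trace := by rw [mul_nonsing_inv _ hdet, mul_one, trace_conjTranspose]

lemma character_inv_eq_star {G : Type*} [Group G] [Finite G] (V : FDRep 𝕜 G) (g : G) :
    V.character g⁻¹ = star (V.character g) := by
  let b := Module.finBasis 𝕜 V
  simpa [FDRep.character, LinearMap.trace_eq_matrix_trace 𝕜 b, LinearMap.toMatrixAlgEquiv]
    using trace_map_inv_eq_star ((LinearMap.toMatrixAlgEquiv b).toMulEquiv.toMonoidHom.comp V.ρ) g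

end Unitarization

section Splitting

universe u

variable {k : Type u} [Field k]

lemma finrank_eq_zero_iff_isZero {G : Type*} [Monoid G] (V : FDRep k G) :
    Module.finrank k V = 0 ↔ Limits.IsZero V := by
  rw [Module.finrank_zero_iff, Limits.IsZero.iff_id_eq_zero]
  refine ⟨fun _ => ?_, fun h => subsingleton_of_forall_eq (0 : V) fun x => ?_⟩
  · ext x
    exact Subsingleton.elim (α := V) _ _
  · exact congr($(h).hom.hom.hom x)

lemma finrank_pos_of_simple {G : Type*} [Monoid G] (V : FDRep k G) [Simple V] :
    0 < Module.finrank k V :=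
  Nat.pos_of_ne_zero fun h => Simple.not_isZero V ((finrank_eq_zero_iff_isZero V).1 h)

lemma trace_comp_eq_character {G : Type*} [Monoid G] {W X : FDRep k G} (i : X ⟶ W) (p : W ⟶ X)
    (hip : i ≫ p = 𝟙 X) (g : G) :
    LinearMap.trace k W (i.hom.hom.hom ∘ₗ p.hom.hom.hom ∘ₗ W.ρ g) = X.character g := by
  have hp : p.hom.hom.hom ∘ₗ W.ρ g = X.ρ g ∘ₗ p.hom.hom.hom := congr($(p.comm g).hom.hom)
  have hi : p.hom.hom.hom ∘ₗ i.hom.hom.hom = LinearMap.id := congr($(hip).hom.hom.hom)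
  rw [LinearMap.trace_comp_comm', hp, LinearMap.comp_assoc, hi, LinearMap.comp_id]
  rfl

lemma character_eq_add_of_splitting {G : Type*} [Monoid G] {S : ShortComplex (FDRep k G)}
    (s : S.Splitting) : S.X₂.character = S.X₁.character + S.X₃.character := by
  ext g
  have hid : S.f.hom.hom.hom ∘ₗ s.r.hom.hom.hom + s.s.hom.hom.hom ∘ₗ S.g.hom.hom.hom =
      LinearMap.id := congr($(s.id).hom.hom.hom)
  rw [Pi.add_apply, ← trace_comp_eq_character S.f s.r s.f_r,
    ← trace_comp_eq_character s.s S.g s.s_g, ← map_add, ← LinearMap.comp_assoc,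
    ← LinearMap.comp_assoc, ← LinearMap.add_comp, hid]
  rfl

lemma exists_mono_of_not_simple {C : Type*} [Category* C] [Limits.HasZeroMorphisms C] {W : C}
    (hW0 : ¬ Limits.IsZero W) (hW : ¬ Simple W) :
    ∃ (Y : C) (f : Y ⟶ W), Mono f ∧ f ≠ 0 ∧ ¬ IsIso f := by
  by_contra! hcon
  refine hW ⟨fun {Y} f hf => ⟨fun hiso hzero => hW0 ?_, hcon Y f hf⟩⟩
  subst hzero
  rw [Limits.IsZero.iff_id_eq_zero, ← IsIso.inv_hom_id (0 : Y ⟶ W), Limits.comp_zero]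

variable [CharZero k] {G : Type u} [Group G] [Finite G]

lemma exists_character_eq_add_of_not_simple {W : FDRep k G}
    (hW0 : ¬ Limits.IsZero W) (hW : ¬ Simple W) :
    ∃ Y Z : FDRep k G, Module.finrank k Y < Module.finrank k W ∧
      Module.finrank k Z < Module.finrank k W ∧ W.character = Y.character + Z.character := by
  obtain ⟨Y, f, hmono, hf0, hiso⟩ := exists_mono_of_not_simple hW0 hW
  let S := ShortComplex.mk f (Limits.cokernel.π f) (Limits.cokernel.condition f)
  have hS : S.ShortExact := { exact := ShortComplex.exact_cokernel f }
  have hχ := character_eq_add_of_splitting hS.splittingOfInjective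
  have hdim : Module.finrank k W = Module.finrank k Y + Module.finrank k S.X₃ := by
    simpa [S, ← Nat.cast_add] using congrFun hχ 1
  have hY : Module.finrank k Y ≠ 0 := fun h =>
    hf0 (((finrank_eq_zero_iff_isZero Y).1 h).eq_zero_of_src f)
  have hZ : Module.finrank k S.X₃ ≠ 0 := fun h => hiso <| by
    have := Preadditive.epi_of_cokernel_zero (((finrank_eq_zero_iff_isZero _).1 h).eq_zero_of_tgt
      (Limits.cokernel.π f))
    exact isIso_of_mono_of_epi f
  exact ⟨Y, S.X₃, by lia, by lia, hχ⟩

lemma character_mem_span_irreducible {ι : Type*} (rep : ι → FDRep k G)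
    (hcomplete : ∀ V : FDRep k G, Simple V → ∃ i, Nonempty (V ≅ rep i)) (W : FDRep k G) :
    W.character ∈ Submodule.span k (Set.range fun i => (rep i).character) := by
  induction hd : Module.finrank k W using Nat.strong_induction_on generalizing W with
  | _ d ih =>
    subst hd
    by_cases hW0 : Limits.IsZero W
    · have : Subsingleton W := Module.finrank_zero_iff.1 ((finrank_eq_zero_iff_isZero W).2 hW0)
      have hχ : W.character = 0 := funext fun g => by
        rw [FDRep.character, Subsingleton.elim (W.ρ g) 0, map_zero, Pi.zero_apply]
      exact hχ ▸ zero_mem _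
    by_cases hW : Simple W
    · obtain ⟨j, ⟨e⟩⟩ := hcomplete W hW
      exact Submodule.subset_span ⟨j, (FDRep.char_iso e).symm⟩
    · obtain ⟨Y, Z, hY, hZ, hχ⟩ := exists_character_eq_add_of_not_simple hW0 hW
      exact hχ ▸ add_mem (ih _ hY Y rfl) (ih _ hZ Z rfl)

end Splitting

section CharacterTheory

variable {G : Type} [Group G] [Fintype G]

/-- The pairing `φ ↦ |G|⁻¹ ∑ φ(g) ψ(g⁻¹)` of class functions. It is taken `ℂ`-bilinear; on
characters it agrees with the Hermitian inner product. -/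
def charPairing (ψ : G → ℂ) : (G → ℂ) →ₗ[ℂ] ℂ where
  toFun φ := (Nat.card G : ℂ)⁻¹ * ∑ g, φ g * ψ g⁻¹
  map_add' φ φ' := by simp [add_mul, sum_add_distrib, mul_add]
  map_smul' a φ := by simp [mul_sum, mul_assoc, mul_left_comm]

lemma charPairing_apply (φ ψ : G → ℂ) :
    charPairing ψ φ = (Nat.card G : ℂ)⁻¹ * ∑ g, φ g * ψ g⁻¹ := rfl

lemma charPairing_single_one [DecidableEq G] (ψ : G → ℂ) (a : ℂ) :
    charPairing ψ (Pi.single 1 a) = (Nat.card G : ℂ)⁻¹ * (a * ψ 1) := by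
  rw [charPairing_apply, Fintype.sum_eq_single 1 fun g hg => by simp [hg]]
  simp

lemma charPairing_character (ρ W : FDRep ℂ G) :
    charPairing ρ.character W.character = multIn ρ W := by
  have := invertibleOfNonzero (NeZero.ne (Nat.card G : ℂ))
  exact FDRep.scalar_product_char_eq_finrank_equivariant ρ W

variable {ι : Type} (rep : ι → FDRep ℂ G) [∀ i, Simple (rep i)]

section Orthogonality

variable (hinj : ∀ i j : ι, Nonempty (rep i ≅ rep j) → i = j)

include hinj in
lemma charPairing_irreducible [DecidableEq ι] (i j : ι) :
    charPairing (rep j).character (rep i).character = if i = j then 1 else 0 := by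
  classical
  have := invertibleOfNonzero (NeZero.ne (Nat.card G : ℂ))
  rw [charPairing_apply, FDRep.char_orthonormal]
  exact if_congr ⟨hinj i j, fun h => ⟨eqToIso (congrArg rep h)⟩⟩ rfl rfl

lemma inner_character_eq_card_mul_charPairing (V : FDRep ℂ G) (f : G → ℂ) :
    inner ℂ (WithLp.toLp 2 V.character : EuclideanSpace ℂ G) (WithLp.toLp 2 f) =
      Nat.card G * charPairing V.character f := by
  rw [charPairing_apply, mul_inv_cancel_left₀ (NeZero.ne _), PiLp.inner_apply]
  simp [character_inv_eq_star]

include hinj in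
lemma sum_norm_charPairing_sq_le [Fintype ι] (f : G → ℂ) :
    ∑ i, ‖charPairing (rep i).character f‖ ^ 2 ≤ (Nat.card G : ℝ)⁻¹ * ∑ g, ‖f g‖ ^ 2 := by
  classical
  have hG : (0 : ℝ) < Nat.card G := by exact_mod_cast Nat.card_pos
  set s : ℝ := √(Nat.card G) with hs
  have hs0 : s ≠ 0 := (Real.sqrt_pos.2 hG).ne'
  have hs2 : (Nat.card G : ℂ) = s ^ 2 := by
    rw [← Complex.ofReal_pow, hs, Real.sq_sqrt hG.le, Complex.ofReal_natCast]
  let v : ι → EuclideanSpace ℂ G := fun i => (s : ℂ)⁻¹ • WithLp.toLp 2 (rep i).character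
  have hinner (i : ι) (φ : G → ℂ) :
      inner ℂ (v i) (WithLp.toLp 2 φ) = s * charPairing (rep i).character φ := by
    rw [inner_smul_left, inner_character_eq_card_mul_charPairing, hs2, map_inv₀,
      Complex.conj_ofReal]
    field_simp
  have hv : Orthonormal ℂ v := by
    rw [orthonormal_iff_ite]
    intro i j
    rw [inner_smul_right, hinner, charPairing_irreducible rep hinj,
      inv_mul_cancel_left₀ (by exact_mod_cast hs0)]
    exact if_congr eq_comm rfl rfl
  have hbessel := hv.sum_inner_products_le (WithLp.toLp 2 f) (s := univ)
  simp only [hinner, norm_mul, mul_pow, ← mul_sum, EuclideanSpace.norm_sq_eq, Complex.norm_real,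
    Real.norm_eq_abs, sq_abs, hs, Real.sq_sqrt hG.le] at hbessel
  rwa [le_inv_mul_iff₀ hG]

omit [Fintype G] in
include hinj in
lemma sum_finrank_sq_le_card [Finite G] [Fintype ι] :
    ∑ i, (Module.finrank ℂ (rep i) : ℝ) ^ 2 ≤ Nat.card G := by
  classical
  have := Fintype.ofFinite G
  have hG : (Nat.card G : ℂ) ≠ 0 := NeZero.ne _
  have hsum : ∑ g : G, ‖(Pi.single 1 (Nat.card G) : G → ℂ) g‖ ^ 2 = (Nat.card G : ℝ) ^ 2 := by
    rw [Fintype.sum_eq_single 1 fun g hg => by simp [hg]]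
    simp
  have h := sum_norm_charPairing_sq_le rep hinj (Pi.single 1 (Nat.card G : ℂ))
  rw [hsum, sq (Nat.card G : ℝ), inv_mul_cancel_left₀ (NeZero.ne _)] at h
  simpa only [charPairing_single_one, inv_mul_cancel_left₀ hG, FDRep.char_one,
    Complex.norm_natCast] using h

end Orthogonality

section Completeness

variable (hcomplete : ∀ V : FDRep ℂ G, Simple V → ∃ i, Nonempty (V ≅ rep i))

variable (hinj : ∀ i j : ι, Nonempty (rep i ≅ rep j) → i = j) [Fintype ι]

omit [Fintype G] in
include hcomplete hinj in
lemma character_eq_sum_multIn_smul [Finite G] (W : FDRep ℂ G) :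
    W.character = ∑ i, (multIn (rep i) W : ℂ) • (rep i).character := by
  classical
  have := Fintype.ofFinite G
  obtain ⟨a, ha⟩ := (Submodule.mem_span_range_iff_exists_fun ℂ).1
    (character_mem_span_irreducible rep hcomplete W)
  have hcoeff (i : ι) : (multIn (rep i) W : ℂ) = a i := by
    rw [← charPairing_character, ← ha]
    simp [charPairing_irreducible rep hinj]
  simp only [hcoeff, ha]

include hcomplete hinj in
lemma tensorChain_pow_apply [DecidableEq ι] (η : FDRep ℂ G) (r : ℕ) (l ρ : ι) :
    ((tensorChain rep η ^ r) l ρ : ℂ) =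
      (Module.finrank ℂ (rep ρ) : ℂ) / Module.finrank ℂ (rep l) *
        charPairing (rep ρ).character
          ((rep l).character * ((Module.finrank ℂ η : ℂ)⁻¹ • η.character) ^ r) := by
  have hdim (i : ι) : (Module.finrank ℂ (rep i) : ℂ) ≠ 0 := by
    exact_mod_cast (finrank_pos_of_simple (rep i)).ne'
  induction r generalizing l with
  | zero =>
    rw [pow_zero, pow_zero, mul_one, charPairing_irreducible rep hinj, Matrix.one_apply]
    split_ifs with h
    · rw [h, div_self (hdim ρ), Complex.ofReal_one, mul_one]
    · rw [Complex.ofReal_zero, mul_zero]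
  | succ r ih =>
    set u := (Module.finrank ℂ η : ℂ)⁻¹ • η.character
    have hstep : (rep l).character * u = (Module.finrank ℂ η : ℂ)⁻¹ •
        ∑ i, (multIn (rep i) (rep l ⊗ η) : ℂ) • (rep i).character := by
      rw [← character_eq_sum_multIn_smul rep hcomplete hinj, FDRep.char_tensor, mul_smul_comm]
    rw [pow_succ', Matrix.mul_apply, pow_succ', ← mul_assoc, hstep, smul_mul_assoc, sum_mul,
      map_smul, map_sum, Complex.ofReal_sum, smul_sum, mul_sum]
    refine sum_congr rfl fun i _ => ?_
    rw [Complex.ofReal_mul, ih, tensorChain, smul_mul_assoc, map_smul, smul_eq_mul, smul_eq_mul]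
    push_cast
    field [hdim i]

include hcomplete hinj in
lemma tensorChain_pow_sub_plancherel [DecidableEq ι] [DecidableEq G] {triv : ι}
    (htriv : ∀ g, (rep triv).character g = 1) (η : FDRep ℂ G) (r : ℕ) (ρ : ι) :
    (((tensorChain rep η ^ r) triv ρ - plancherel rep ρ : ℝ) : ℂ) =
      Module.finrank ℂ (rep ρ) * charPairing (rep ρ).character
        (((Module.finrank ℂ η : ℂ)⁻¹ • η.character) ^ r - Pi.single 1 1) := by
  have hχ : (rep triv).character = 1 := funext htriv
  have hdim : (Module.finrank ℂ (rep triv) : ℂ) = 1 := by rw [← FDRep.char_one, htriv]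
  rw [Complex.ofReal_sub, tensorChain_pow_apply rep hcomplete hinj, hχ, hdim, one_mul, div_one,
    map_sub, charPairing_single_one, FDRep.char_one, plancherel, Nat.card_eq_fintype_card]
  push_cast
  ring

include hcomplete hinj in
lemma four_mul_tvDist_sq_le [DecidableEq ι] [DecidableEq G] {triv : ι}
    (htriv : ∀ g, (rep triv).character g = 1) (η : FDRep ℂ G) (hη : Module.finrank ℂ η ≠ 0)
    (r : ℕ) :
    4 * tvDist (fun ρ => (tensorChain rep η ^ r) triv ρ) (plancherel rep) ^ 2 ≤
      ∑ g ∈ univ.erase (1 : G), (‖η.character g‖ / Module.finrank ℂ η) ^ (2 * r) := by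
  set f : G → ℂ := ((Module.finrank ℂ η : ℂ)⁻¹ • η.character) ^ r - Pi.single 1 1 with hf
  have hG : (Nat.card G : ℝ) ≠ 0 := NeZero.ne _
  have hf1 : f 1 = 0 := by simp [hf, hη]
  have hfne (g : G) (hg : g ∈ univ.erase (1 : G)) :
      ‖f g‖ ^ 2 = (‖η.character g‖ / Module.finrank ℂ η) ^ (2 * r) := by
    simp [hf, Finset.ne_of_mem_erase hg, div_eq_inv_mul, ← pow_mul, mul_comm r]
  have habs (ρ : ι) : |(tensorChain rep η ^ r) triv ρ - plancherel rep ρ| =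
      Module.finrank ℂ (rep ρ) * ‖charPairing (rep ρ).character f‖ := by
    rw [← Real.norm_eq_abs, ← Complex.norm_real,
      tensorChain_pow_sub_plancherel rep hcomplete hinj htriv, ← hf, norm_mul,
      Complex.norm_natCast]
  calc 4 * tvDist (fun ρ => (tensorChain rep η ^ r) triv ρ) (plancherel rep) ^ 2
      = (∑ i, (Module.finrank ℂ (rep i) : ℝ) * ‖charPairing (rep i).character f‖) ^ 2 := by
        simp only [tvDist, habs]
        ring
    _ ≤ (∑ i, (Module.finrank ℂ (rep i) : ℝ) ^ 2) *
          ∑ i, ‖charPairing (rep i).character f‖ ^ 2 := sum_mul_sq_le_sq_mul_sq _ _ _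
    _ ≤ Nat.card G * ((Nat.card G : ℝ)⁻¹ * ∑ g, ‖f g‖ ^ 2) := by
        gcongr
        · exact sum_finrank_sq_le_card rep hinj
        · exact sum_norm_charPairing_sq_le rep hinj f
    _ = ∑ g ∈ univ.erase (1 : G), (‖η.character g‖ / Module.finrank ℂ η) ^ (2 * r) := by
        rw [mul_inv_cancel_left₀ hG, ← add_sum_erase _ _ (mem_univ (1 : G)), hf1,
          sum_congr rfl hfne]
        simp

end Completeness

end CharacterTheory

section Isometries

open LinearMap (ker range)

variable {E V : Type*} [Field E] [AddCommGroup V] [Module E V] {σ : E →+* E}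
  {B : V →ₛₗ[σ] V →ₗ[E] E} {g g' : Module.End E V}

/-- The endomorphism `g` preserves the sesquilinear form `B`. -/
def IsFormIsometry (B : V →ₛₗ[σ] V →ₗ[E] E) (g : Module.End E V) : Prop :=
  ∀ x y, B (g x) (g y) = B x y

/-- The Wall form of `g`, the sesquilinear form `(u, (g - 1) y) ↦ B u y` on `range (g - 1)`. It is
encoded as a function on `V × V` through an arbitrary preimage of the second argument, and is
meaningful only on `range (g - 1)`. -/
def wallForm (B : V →ₛₗ[σ] V →ₗ[E] E) (g : Module.End E V) (u v : V) : E :=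
  B u (Function.invFun ⇑(g - 1) v)

lemma ker_sub_one_le_orthogonalBilin (hg : IsFormIsometry B g) :
    ker (g - 1) ≤ (range (g - 1)).orthogonalBilin B := by
  rintro x hx _ ⟨v, rfl⟩
  have hgx : g x = x := sub_eq_zero.1 hx
  simpa [sub_eq_zero, hgx] using hg v x

lemma ker_sub_one_eq_orthogonalBilin [FiniteDimensional E V] (hB : B.Nondegenerate)
    (hg : IsFormIsometry B g) : ker (g - 1) = (range (g - 1)).orthogonalBilin B := by
  refine (ker_sub_one_le_orthogonalBilin hg).antisymm fun x hx => ?_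
  have hinj : Function.Injective g :=
    (injective_iff_map_eq_zero g).2 fun y hy => hB.1 y fun z => by rw [← hg, hy]; simp
  refine hB.2 _ fun y => ?_
  obtain ⟨v, rfl⟩ := LinearMap.injective_iff_surjective.1 hinj y
  have hv : B ((g - 1) v) x = 0 := hx _ ⟨v, rfl⟩
  calc B (g v) ((g - 1) x) = B v x - B (g v) x := by simp [hg v x]
    _ = -B ((g - 1) v) x := by simp
    _ = 0 := by rw [hv, neg_zero]

lemma wallForm_apply (hg : IsFormIsometry B g) {u : V} (hu : u ∈ range (g - 1)) (y : V) :
    wallForm B g u ((g - 1) y) = B u y := by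
  have hker : Function.invFun ⇑(g - 1) ((g - 1) y) - y ∈ ker (g - 1) :=
    LinearMap.sub_mem_ker_iff.2 (Function.invFun_eq ⟨y, rfl⟩)
  rw [wallForm, ← sub_eq_zero, ← map_sub]
  exact ker_sub_one_le_orthogonalBilin hg hker u hu

lemma wallForm_add_wallForm_swap (hB : B.IsSymm) (hg : IsFormIsometry B g) {u v : V}
    (hu : u ∈ range (g - 1)) (hv : v ∈ range (g - 1)) :
    wallForm B g u v + σ (wallForm B g v u) = -B u v := by
  obtain ⟨x, rfl⟩ := id hu
  obtain ⟨y, rfl⟩ := id hv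
  rw [wallForm_apply hg hu, wallForm_apply hg hv, hB.eq]
  simp [hg x y]
  ring

lemma wallForm_sum_smul {ι : Type*} [Fintype ι] (hg : IsFormIsometry B g) {w : ι → V}
    (hw : ∀ i, w i ∈ range (g - 1)) {u : V} (hu : u ∈ range (g - 1)) (a : ι → E) :
    wallForm B g u (∑ i, a i • w i) = ∑ i, a i * wallForm B g u (w i) := by
  choose y hy using hw
  simp only [← hy, ← map_smul, ← map_sum, wallForm_apply hg hu]
  simp

lemma eq_of_wallForm_eq [FiniteDimensional E V] (hB : B.Nondegenerate) (hg : IsFormIsometry B g)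
    (hg' : IsFormIsometry B g') {ι : Type*} [Finite ι] {w : ι → V}
    (hw : Submodule.span E (Set.range w) = range (g - 1))
    (hw' : Submodule.span E (Set.range w) = range (g' - 1))
    (h : ∀ i j, wallForm B g (w i) (w j) = wallForm B g' (w i) (w j)) : g = g' := by
  have := Fintype.ofFinite ι
  have hmem (i : ι) : w i ∈ range (g - 1) := hw ▸ Submodule.subset_span ⟨i, rfl⟩
  have hmem' (i : ι) : w i ∈ range (g' - 1) := hw' ▸ Submodule.subset_span ⟨i, rfl⟩
  refine sub_left_injective (LinearMap.ext fun x => ?_ : g - 1 = g' - 1)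
  have hx : (g - 1) x ∈ range (g' - 1) := hw' ▸ hw ▸ LinearMap.mem_range_self _ x
  obtain ⟨x', hx'⟩ := hx
  obtain ⟨a, ha⟩ := (Submodule.mem_span_range_iff_exists_fun E).1
    (hw ▸ LinearMap.mem_range_self (g - 1) x)
  have hwx (i : ι) : B (w i) (x - x') = 0 := by
    rw [map_sub, sub_eq_zero, ← wallForm_apply hg (hmem i), ← wallForm_apply hg' (hmem' i), hx',
      ← ha, wallForm_sum_smul hg hmem (hmem i), wallForm_sum_smul hg' hmem' (hmem' i)]
    simp only [h]
  have hker : x - x' ∈ ker (g' - 1) := by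
    rw [ker_sub_one_eq_orthogonalBilin hB hg', ← hw']
    intro u hu
    have hle : Submodule.span E (Set.range w) ≤ ker (B.flip (x - x')) :=
      Submodule.span_le.2 (Set.range_subset_iff.2 hwx)
    exact hle hu
  rw [← hx', ← LinearMap.sub_mem_ker_iff.1 hker]

end Isometries

section Counting

variable {E : Type*} [Field E] [Fintype E] {q : ℕ}

section Field

open Polynomial in
lemma card_add_pow_eq_le [DecidableEq E] (hq : 2 ≤ q) (c : E) :
    #{x : E | x + x ^ q = c} ≤ q := by
  set p : E[X] := X ^ q + (X - C c)
  have hdeg : (X - C c : E[X]).degree < q := by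
    rw [degree_X_sub_C]
    exact_mod_cast hq
  have hp : p.natDegree = q := natDegree_eq_of_degree_eq_some <|
    (degree_add_eq_left_of_degree_lt (by rwa [degree_X_pow])).trans (degree_X_pow q)
  have hp0 : p ≠ 0 := (monic_X_pow_add hdeg).ne_zero
  refine (p.card_le_degree_of_subset_roots fun x hx => (mem_roots hp0).2 ?_).trans_eq hp
  have hx : x + x ^ q = c := by simpa using hx
  simp [p, ← hx]

lemma two_le_of_card_eq_sq (hE : Fintype.card E = q ^ 2) : 2 ≤ q := by
  have h : 1 < q ^ 2 := hE ▸ Fintype.one_lt_card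
  by_contra! hq
  interval_cases q <;> simp at h

lemma exists_ringHom_apply_eq_pow (hE : Fintype.card E = q ^ 2) :
    ∃ σ : E →+* E, ∀ a, σ a = a ^ q := by
  obtain ⟨p, hp⟩ := CharP.exists E
  obtain ⟨m, hprime, hm⟩ := FiniteField.card E p
  have := Fact.mk hprime
  have hdvd : q ∣ p ^ (m : ℕ) := ⟨q, by rw [← hm, hE, sq]⟩
  obtain ⟨k, -, rfl⟩ := (Nat.dvd_prime_pow hprime).1 hdvd
  exact ⟨iterateFrobenius E p k, fun a => iterateFrobenius_def p k a⟩

lemma prod_le_pow_card_sq_of_mul_swap_le {ι : Type*} [Fintype ι] {t : ι × ι → ℕ}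
    (h : ∀ p, t p * t p.swap ≤ q ^ 2) : ∏ p, t p ≤ q ^ Fintype.card ι ^ 2 := by
  have hswap : ∏ p, t p = ∏ p : ι × ι, t p.swap := ((Equiv.prodComm ι ι).prod_comp t).symm
  rw [← Nat.pow_le_pow_iff_left two_ne_zero]
  calc (∏ p, t p) ^ 2 = ∏ p, t p * t p.swap := by rw [prod_mul_distrib, ← hswap, sq]
    _ ≤ ∏ _p : ι × ι, q ^ 2 := prod_le_prod' fun p _ => h p
    _ = (q ^ Fintype.card ι ^ 2) ^ 2 := by
        rw [prod_const, card_univ, Fintype.card_prod, ← sq, ← pow_mul, ← pow_mul, mul_comm]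

-- The entries above the diagonal are free, those on the diagonal are roots of `x + x ^ q = S i i`,
-- and those below are determined.
lemma card_add_swap_pow_eq_le [DecidableEq E] (hE : Fintype.card E = q ^ 2) {ι : Type*}
    [Fintype ι] [LinearOrder ι] (S : ι → ι → E) :
    #{A : ι → ι → E | ∀ i j, A i j + A j i ^ q = S i j} ≤ q ^ Fintype.card ι ^ 2 := by
  let T (p : ι × ι) : Finset E :=
    if p.1 < p.2 then univ
    else if p.1 = p.2 then univ.filter (fun x => x + x ^ q = S p.1 p.2)
    else {0}
  have hT (p : ι × ι) : #(T p) * #(T p.swap) ≤ q ^ 2 := by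
    rcases lt_trichotomy p.1 p.2 with h | h | h
    · simp [T, h, h.not_gt, h.ne', hE]
    · have hdiag := card_add_pow_eq_le (two_le_of_card_eq_sq hE) (S p.2 p.2)
      simpa [T, h, sq] using Nat.mul_le_mul hdiag hdiag
    · simp [T, h, h.not_gt, h.ne', hE]
  refine le_trans ?_ (prod_le_pow_card_sq_of_mul_swap_le hT)
  rw [← Fintype.card_piFinset]
  refine card_le_card_of_injOn (fun A p => if p.1 ≤ p.2 then A p.1 p.2 else 0) ?_ ?_
  · intro A hA
    replace hA : ∀ i j, A i j + A j i ^ q = S i j := by simpa using hA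
    refine mem_coe.2 (Fintype.mem_piFinset.2 fun p => ?_)
    rcases lt_trichotomy p.1 p.2 with h | h | h
    · simp [T, h]
    · simpa [T, h] using hA p.2 p.2
    · simp [T, h.not_gt, h.ne', h.not_ge]
  · intro A hA A' hA' h
    replace hA : ∀ i j, A i j + A j i ^ q = S i j := by simpa using hA
    replace hA' : ∀ i j, A' i j + A' j i ^ q = S i j := by simpa using hA'
    have hupper {i j : ι} (hij : i ≤ j) : A i j = A' i j := by
      simpa [hij] using congrFun h (i, j)
    funext i j
    rcases le_total i j with hij | hij
    · exact hupper hij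
    · rw [eq_sub_of_add_eq (hA i j), eq_sub_of_add_eq (hA' i j), hupper hij]

end Field

variable {V : Type*} [AddCommGroup V] [Module E V]

lemma prod_card_pow_sub_le_card_span_eq [Fintype V] {k : ℕ} {W : Submodule E V}
    [DecidablePred fun w : Fin k → V => Submodule.span E (Set.range w) = W]
    (hW : Module.finrank E W = k) :
    ∏ i : Fin k, (Fintype.card E ^ k - Fintype.card E ^ (i : ℕ)) ≤
      #{w : Fin k → V | Submodule.span E (Set.range w) = W} := by
  have hcard := card_linearIndependent (K := E) (V := W) hW.ge
  rw [hW] at hcard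
  rw [← hcard, ← Fintype.card_subtype, ← Nat.card_eq_fintype_card]
  refine Nat.card_le_card_of_injective (fun u => ⟨fun i => (u.1 i : V), ?_⟩) fun u u' h => ?_
  · have hspan : Submodule.span E (Set.range u.1) = ⊤ :=
      u.2.span_eq_top_of_card_eq_finrank' (by simp [hW])
    rw [← Function.comp_def, Set.range_comp]
    change Submodule.span E (W.subtype '' _) = W
    rw [Submodule.span_image, hspan, Submodule.map_subtype_top]
  · exact Subtype.ext (funext fun i => Subtype.ext (congrFun (congrArg Subtype.val h) i))

lemma three_mul_pow_pow_le {Q : ℕ} (hQ : 4 ≤ Q) (k : ℕ) :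
    (3 * Q ^ k) ^ k ≤ 4 ^ k * ∏ i : Fin k, (Q ^ k - Q ^ (i : ℕ)) := by
  have hstep (i : Fin k) : 3 * Q ^ k ≤ 4 * (Q ^ k - Q ^ (i : ℕ)) := by
    have h : Q ^ (i : ℕ) * 4 ≤ Q ^ k := calc
      Q ^ (i : ℕ) * 4 ≤ Q ^ (i + 1 : ℕ) := by rw [pow_succ]; gcongr
      _ ≤ Q ^ k := Nat.pow_le_pow_right (by lia) i.2
    lia
  calc (3 * Q ^ k) ^ k = ∏ _i : Fin k, 3 * Q ^ k := by simp
    _ ≤ ∏ i : Fin k, 4 * (Q ^ k - Q ^ (i : ℕ)) := prod_le_prod' fun i _ => hstep i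
    _ = 4 ^ k * ∏ i : Fin k, (Q ^ k - Q ^ (i : ℕ)) := by simp [prod_mul_distrib]

variable [FiniteDimensional E V] {σ : E →+* E} {B : V →ₛₗ[σ] V →ₗ[E] E}

lemma card_isometry_of_range_eq_span_le (hE : Fintype.card E = q ^ 2) (hσ : ∀ a, σ a = a ^ q)
    (hB : B.IsSymm) (hnd : B.Nondegenerate) {k : ℕ} (w : Fin k → V)
    {s : Finset (Module.End E V)} (hs : ∀ g ∈ s, IsFormIsometry B g)
    (hw : ∀ g ∈ s, Submodule.span E (Set.range w) = LinearMap.range (g - 1)) : #s ≤ q ^ k ^ 2 := by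
  classical
  have hmem {g : Module.End E V} (hg : g ∈ s) (i : Fin k) : w i ∈ LinearMap.range (g - 1) :=
    hw g hg ▸ Submodule.subset_span ⟨i, rfl⟩
  have hcard := card_add_swap_pow_eq_le hE fun i j => -B (w i) (w j)
  rw [Fintype.card_fin] at hcard
  refine le_trans (card_le_card_of_injOn (fun g i j => wallForm B g (w i) (w j)) ?_ ?_) hcard
  · intro g hg
    simpa [hσ] using fun i j => wallForm_add_wallForm_swap hB (hs g hg) (hmem hg i) (hmem hg j)
  · intro g hg g' hg' h
    exact eq_of_wallForm_eq hnd (hs g hg) (hs g' hg') (hw g hg) (hw g' hg')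
      fun i j => congrFun₂ h i j

lemma three_pow_mul_card_isometry_le (hE : Fintype.card E = q ^ 2) (hσ : ∀ a, σ a = a ^ q)
    (hB : B.IsSymm) (hnd : B.Nondegenerate) {k : ℕ} {s : Finset (Module.End E V)}
    (hs : ∀ g ∈ s, IsFormIsometry B g)
    (hk : ∀ g ∈ s, Module.finrank E (LinearMap.range (g - 1)) = k) :
    3 ^ k * q ^ k ^ 2 * #s ≤ 4 ^ k * q ^ (2 * k * Module.finrank E V) := by
  classical
  have := Module.finite_of_finite E (M := V)
  have := Fintype.ofFinite V
  have hq := two_le_of_card_eq_sq hE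
  have hcount : #s * ∏ i : Fin k, (Fintype.card E ^ k - Fintype.card E ^ (i : ℕ)) ≤
      #(univ : Finset (Fin k → V)) * q ^ k ^ 2 :=
    card_mul_le_card_mul
      (fun (g : Module.End E V) w => Submodule.span E (Set.range w) = LinearMap.range (g - 1))
      (fun g hg => prod_card_pow_sub_le_card_span_eq (hk g hg))
      fun w _ => card_isometry_of_range_eq_span_le hE hσ hB hnd w
        (fun g hg => hs g (mem_filter.1 hg).1) fun g hg => (mem_filter.1 hg).2
  have hcard : #(univ : Finset (Fin k → V)) = q ^ (2 * k * Module.finrank E V) := by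
    rw [card_univ, Fintype.card_fun, Fintype.card_fin, Module.card_eq_pow_finrank (K := E), hE]
    ring
  refine Nat.le_of_mul_le_mul_right ?_ (show 0 < q ^ k ^ 2 by positivity)
  calc 3 ^ k * q ^ k ^ 2 * #s * q ^ k ^ 2 = #s * (3 * (q ^ 2) ^ k) ^ k := by ring
    _ ≤ #s * (4 ^ k * ∏ i : Fin k, ((q ^ 2) ^ k - (q ^ 2) ^ (i : ℕ))) := by
        gcongr
        exact three_mul_pow_pow_le (by nlinarith) k
    _ ≤ 4 ^ k * (q ^ (2 * k * Module.finrank E V) * q ^ k ^ 2) := by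
        rw [mul_left_comm, ← hcard, ← hE]
        gcongr
    _ = 4 ^ k * q ^ (2 * k * Module.finrank E V) * q ^ k ^ 2 := by ring

lemma pow_sq_add_mul_le {p : ℝ} (hp0 : 0 ≤ p) (hp : p ≤ 1 / 2) {k : ℕ} (hk : 1 ≤ k) (c : ℕ) :
    p ^ (k ^ 2 + 2 * k * c) ≤ 2 * (1 / 4) ^ k * p ^ (2 * c) := by
  obtain ⟨m, rfl⟩ := Nat.exists_eq_add_of_le' hk
  calc p ^ ((m + 1) ^ 2 + 2 * (m + 1) * c) ≤ p ^ (2 * m + 1 + 2 * c) :=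
        pow_le_pow_of_le_one hp0 (by linarith) (by nlinarith)
    _ ≤ (1 / 2) ^ (2 * m + 1) * p ^ (2 * c) := by rw [pow_add]; gcongr
    _ = 2 * (1 / 4) ^ (m + 1) * p ^ (2 * c) := by rw [pow_succ, pow_mul, pow_succ]; ring

lemma card_isometry_mul_pow_le (hE : Fintype.card E = q ^ 2) (hσ : ∀ a, σ a = a ^ q)
    (hB : B.IsSymm) (hnd : B.Nondegenerate) {k : ℕ} (hk0 : 1 ≤ k) {s : Finset (Module.End E V)}
    (hs : ∀ g ∈ s, IsFormIsometry B g)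
    (hk : ∀ g ∈ s, Module.finrank E (LinearMap.range (g - 1)) = k) (c : ℕ) :
    #s * (q : ℝ)⁻¹ ^ (k * (2 * (Module.finrank E V + c))) ≤
      2 * (1 / 3) ^ k * (q : ℝ)⁻¹ ^ (2 * c) := by
  have hq : (2 : ℝ) ≤ q := by exact_mod_cast two_le_of_card_eq_sq hE
  have hcancel (m : ℕ) : (q : ℝ) ^ m * (q : ℝ)⁻¹ ^ m = 1 := by
    rw [← mul_pow, mul_inv_cancel₀ (by positivity), one_pow]
  have hcard : (3 : ℝ) ^ k * q ^ k ^ 2 * #s ≤ 4 ^ k * q ^ (2 * k * Module.finrank E V) := by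
    exact_mod_cast three_pow_mul_card_isometry_le hE hσ hB hnd hs hk
  have hp : (q : ℝ)⁻¹ ≤ 1 / 2 := by
    rw [one_div]
    exact inv_anti₀ two_pos hq
  set d := Module.finrank E V
  set p : ℝ := (q : ℝ)⁻¹
  refine le_of_mul_le_mul_left ?_ (show (0 : ℝ) < 3 ^ k by positivity)
  calc 3 ^ k * (#s * p ^ (k * (2 * (d + c))))
      = 3 ^ k * (q ^ k ^ 2 * p ^ k ^ 2) * #s * p ^ (k * (2 * (d + c))) := by
        rw [hcancel]
        ring
    _ = 3 ^ k * q ^ k ^ 2 * #s * (p ^ (2 * k * d) * p ^ (k ^ 2 + 2 * k * c)) := by ring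
    _ ≤ 4 ^ k * q ^ (2 * k * d) * (p ^ (2 * k * d) * p ^ (k ^ 2 + 2 * k * c)) := by gcongr
    _ = 4 ^ k * (q ^ (2 * k * d) * p ^ (2 * k * d)) * p ^ (k ^ 2 + 2 * k * c) := by ring
    _ = 4 ^ k * p ^ (k ^ 2 + 2 * k * c) := by rw [hcancel, mul_one]
    _ ≤ 4 ^ k * (2 * (1 / 4) ^ k * p ^ (2 * c)) := by
        gcongr
        exact pow_sq_add_mul_le (by positivity) hp hk0 c
    _ = 3 ^ k * (2 * (1 / 3) ^ k * p ^ (2 * c)) := by simp [field]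

lemma sum_isometry_pow_finrank_range_le (hE : Fintype.card E = q ^ 2) (hσ : ∀ a, σ a = a ^ q)
    (hB : B.IsSymm) (hnd : B.Nondegenerate) {s : Finset (Module.End E V)}
    (hs : ∀ g ∈ s, IsFormIsometry B g) (h1 : 1 ∉ s) (c : ℕ) :
    ∑ g ∈ s, (q : ℝ)⁻¹ ^
      (Module.finrank E (LinearMap.range (g - 1)) * (2 * (Module.finrank E V + c))) ≤
        (q : ℝ)⁻¹ ^ (2 * c) := by
  have hmaps (g : Module.End E V) (hg : g ∈ s) :
      Module.finrank E (LinearMap.range (g - 1)) ∈ Ico 1 (Module.finrank E V + 1) := by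
    refine mem_Ico.2
      ⟨Nat.one_le_iff_ne_zero.2 fun h => ?_, Nat.lt_succ_of_le (Submodule.finrank_le _)⟩
    rw [Submodule.finrank_eq_zero, LinearMap.range_eq_bot, sub_eq_zero] at h
    exact h1 (h ▸ hg)
  have hgeom : ∑ k ∈ Ico 1 (Module.finrank E V + 1), (1 / 3 : ℝ) ^ k ≤ 1 / 2 :=
    (geom_sum_Ico_le_of_lt_one (by norm_num) (by norm_num)).trans_eq (by norm_num)
  rw [← sum_fiberwise_of_maps_to hmaps]
  calc _ = ∑ k ∈ Ico 1 (Module.finrank E V + 1),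
        #{g ∈ s | Module.finrank E (LinearMap.range (g - 1)) = k} *
          (q : ℝ)⁻¹ ^ (k * (2 * (Module.finrank E V + c))) := by
        refine sum_congr rfl fun k _ => ?_
        rw [sum_congr rfl fun g hg => by rw [(mem_filter.1 hg).2], sum_const, nsmul_eq_mul]
    _ ≤ ∑ k ∈ Ico 1 (Module.finrank E V + 1), 2 * (1 / 3) ^ k * (q : ℝ)⁻¹ ^ (2 * c) :=
        sum_le_sum fun k hk => card_isometry_mul_pow_le hE hσ hB hnd (mem_Ico.1 hk).1
          (fun g hg => hs g (mem_filter.1 hg).1) (fun g hg => (mem_filter.1 hg).2) c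
    _ = 2 * (∑ k ∈ Ico 1 (Module.finrank E V + 1), (1 / 3 : ℝ) ^ k) * (q : ℝ)⁻¹ ^ (2 * c) := by
        rw [mul_sum, sum_mul]
    _ ≤ 2 * (1 / 2) * (q : ℝ)⁻¹ ^ (2 * c) := by gcongr
    _ = (q : ℝ)⁻¹ ^ (2 * c) := by ring

end Counting

section MatrixIsometries

variable {E : Type} [Field E] {n : ℕ}

lemma finrank_range_toLin'_sub_one_add_fixdim (g : (Matrix (Fin n) (Fin n) E)ˣ) :
    Module.finrank E (LinearMap.range (Matrix.toLin' (g : Matrix (Fin n) (Fin n) E) - 1)) +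
      fixdim g = n := by
  have hsub : Matrix.toLin' ((g : Matrix (Fin n) (Fin n) E) - 1) = Matrix.toLin' ↑g - 1 := by
    rw [map_sub, Matrix.toLin'_one, Module.End.one_eq_id]
  rw [← hsub]
  exact (LinearMap.finrank_range_add_finrank_ker _).trans (Module.finrank_fin_fun E)

lemma pow_fixdim_div_pow {q : ℝ} (hq : q ≠ 0) (g : (Matrix (Fin n) (Fin n) E)ˣ) :
    q ^ fixdim g / q ^ n =
      q⁻¹ ^ Module.finrank E
        (LinearMap.range (Matrix.toLin' (g : Matrix (Fin n) (Fin n) E) - 1)) := by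
  rw [inv_pow, div_eq_iff (by positivity), eq_inv_mul_iff_mul_eq₀ (by positivity), ← pow_add,
    finrank_range_toLin'_sub_one_add_fixdim]

lemma fixdim_one : fixdim (1 : (Matrix (Fin n) (Fin n) E)ˣ) = n := by
  rw [fixdim, Units.val_one, sub_self, map_zero, LinearMap.ker_zero, finrank_top,
    Module.finrank_fin_fun]

variable [Fintype E] {q : ℕ} {σ : E →+* E} {B : (Fin n → E) →ₛₗ[σ] (Fin n → E) →ₗ[E] E}

lemma sum_formIsometry_pow_fixdim_le [DecidableEq (formIsometry fun x y => B x y)]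
    (hE : Fintype.card E = q ^ 2) (hσ : ∀ a, σ a = a ^ q) (hB : B.IsSymm)
    (hnd : B.SeparatingLeft) (c : ℕ) :
    ∑ g ∈ univ.erase (1 : formIsometry fun x y => B x y),
      ((q : ℝ) ^ fixdim g.1 / q ^ n) ^ (2 * (n + c)) ≤ (q : ℝ)⁻¹ ^ (2 * c) := by
  classical
  have hq : (q : ℝ) ≠ 0 := by
    have := two_le_of_card_eq_sq hE
    positivity
  let φ (g : formIsometry fun x y => B x y) : Module.End E (Fin n → E) := Matrix.toLin' g.1.1
  have hφ : Function.Injective φ := fun g g' h =>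
    Subtype.ext (Units.ext (Matrix.toLin'.injective h))
  have hφ1 : φ 1 = 1 := Matrix.toLin'_one
  have hsum := sum_isometry_pow_finrank_range_le (s := (univ.erase 1).image φ) hE hσ hB
    ⟨hnd, fun y hy => hnd y fun x => by rw [← hB.eq, hy, map_zero]⟩
    (forall_mem_image.2 fun g _ => g.2) (by simp [← hφ1, hφ.eq_iff]) c
  rw [sum_image hφ.injOn, Module.finrank_fin_fun] at hsum
  simpa only [pow_fixdim_div_pow hq, ← pow_mul] using hsum

end MatrixIsometries

theorem gu_weil_upper_bound_general {E : Type} [Field E] [Fintype E] {q n : ℕ}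
    (hq : Fintype.card E = q ^ 2) {σ : E →+* E} (hσ : ∀ a, σ a = a ^ q)
    (B : (Fin n → E) →ₛₗ[σ] (Fin n → E) →ₗ[E] E) (hB : B.IsSymm) (hnd : B.SeparatingLeft)
    {ι : Type} [Fintype ι] [DecidableEq ι] (rep : ι → FDRep ℂ (formIsometry fun x y => B x y))
    [∀ i, Simple (rep i)]
    (hcomplete : ∀ V : FDRep ℂ (formIsometry fun x y => B x y),
      Simple V → ∃ i, Nonempty (V ≅ rep i))
    (hinj : ∀ i j : ι, Nonempty (rep i ≅ rep j) → i = j)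
    {triv : ι} (htriv : ∀ g, (rep triv).character g = 1)
    (η : FDRep ℂ (formIsometry fun x y => B x y))
    (hη : ∀ g, ‖η.character g‖ = (q : ℝ) ^ fixdim g.1) (c : ℕ) :
    tvDist (fun ρ => (tensorChain rep η ^ (n + c)) triv ρ) (plancherel rep) ≤
      1 / 2 * (q : ℝ) ^ (-(c : ℤ)) := by
  classical
  have hq2 := two_le_of_card_eq_sq hq
  have hdim : (Module.finrank ℂ η : ℝ) = (q : ℝ) ^ n := by
    rw [← Complex.norm_natCast, ← FDRep.char_one, hη 1, OneMemClass.coe_one, fixdim_one]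
  have hdim0 : Module.finrank ℂ η ≠ 0 := by
    have : (q : ℝ) ^ n ≠ 0 := by positivity
    exact_mod_cast hdim ▸ this
  have hsq := (four_mul_tvDist_sq_le rep hcomplete hinj htriv η hdim0 (n + c)).trans
    ((sum_congr rfl fun g _ => by rw [hη, hdim]).trans_le
      (sum_formIsometry_pow_fixdim_le hq hσ hB hnd c))
  rw [zpow_neg, zpow_natCast, ← inv_pow]
  refine le_of_sq_le_sq ?_ (by positivity)
  rw [mul_pow, ← pow_mul, mul_comm c]
  linarith

/-- **Theorem (upper bound for `GU_n(q)`).**  Let `E = F_{q²}`, let `B` be a nondegenerate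
Hermitian form on `E^n` with isometry group `G = GU_n(q)`, and let `η` be a complex
representation of `G` whose character satisfies `χ^η(g) = (−1)^n·(−q)^{dim ker(g−1)}`
(the Weil representation).  Let `K` be the tensor product Markov chain on `Irr(G)`
associated with `η`, started at the trivial representation, and `π` the Plancherel measure.
Then for every `c > 0` and `r = n + c`, `‖K^r_𝟙 − π‖_TV ≤ 0.7·q^{−c}`. -/
theorem gu_weil_upper_bound {E : Type} [Field E] [Fintype E]
    {q n : ℕ} (hq : Fintype.card E = q ^ 2) (hn : 1 ≤ n)
    (B : (Fin n → E) → (Fin n → E) → E)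
    (hadd₁ : ∀ x x' y, B (x + x') y = B x y + B x' y)
    (hsmul₁ : ∀ (a : E) (x y : Fin n → E), B (a • x) y = a ^ q * B x y)
    (hadd₂ : ∀ x y y', B x (y + y') = B x y + B x y')
    (hsmul₂ : ∀ (a : E) (x y : Fin n → E), B x (a • y) = a * B x y)
    (hconj : ∀ x y, B y x = (B x y) ^ q)
    (hnd : ∀ x, (∀ y, B x y = 0) → x = 0)
    {ι : Type} [Fintype ι] [DecidableEq ι]
    (rep : ι → FDRep ℂ ↥(formIsometry B))
    (hsimple : ∀ i, Simple (rep i))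
    (hcomplete : ∀ V : FDRep ℂ ↥(formIsometry B), Simple V → ∃ i, Nonempty (V ≅ rep i))
    (hinj : ∀ i j : ι, Nonempty (rep i ≅ rep j) → i = j)
    (triv : ι) (htriv : ∀ g : ↥(formIsometry B), (rep triv).character g = 1)
    (η : FDRep ℂ ↥(formIsometry B))
    (hη : ∀ g : ↥(formIsometry B),
      η.character g = (-1 : ℂ) ^ n * (-(q : ℂ)) ^ fixdim (g : (Matrix (Fin n) (Fin n) E)ˣ))
    (c : ℕ) (hc : 0 < c) :
    tvDist (fun ρ => (tensorChain rep η ^ (n + c)) triv ρ) (plancherel rep) ≤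
      0.7 * (q : ℝ) ^ (-(c : ℤ)) := by
  obtain ⟨σ, hσ⟩ := exists_ringHom_apply_eq_pow hq
  obtain ⟨B, rfl⟩ : ∃ B' : (Fin n → E) →ₛₗ[σ] (Fin n → E) →ₗ[E] E, (fun x y => B' x y) = B :=
    ⟨LinearMap.mk₂'ₛₗ σ (RingHom.id E) B hadd₁ (by simpa [hσ] using hsmul₁) hadd₂ hsmul₂, rfl⟩
  have hB : B.IsSymm := ⟨fun x y => (hσ _).trans (hconj x y).symm⟩
  refine (gu_weil_upper_bound_general hq hσ B hB hnd rep hcomplete hinj htriv η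
    (fun g => by simp [hη]) c).trans ?_
  gcongr
  norm_num
end
end

section
/- Let q be an odd prime power with q ≡ 3 (mod 4), n ≥ 1, and let G = Sp_{2n}(q) be the isometry group of a nondegenerate alternating bilinear form on F_q^{2n}. Let Tr ⊂ G denote the set of symplectic transvections, so |Tr| = q^{2n} − 1. Let η be a finite-dimensional complex representation of G with character χ^η and dimension d_η, and let K be the tensor product Markov chain on Irr(G) associated to η, started at the trivial representation 𝟙. Define f_* on Irr(G) by f_*(ρ) = (Σ_{t∈Tr} χ^ρ(t)) / (d_ρ · √(q^{2n}−1)). Then for all integers r ≥ 0 and s ≥ 0, E_{K^r}[(f_*)^s] = (q^{2n}−1)^{s/2} · (q^{2n}−1)^{−s} · Σ_{(t_1,…,t_s)∈Tr^s} (χ^η(t_1⋯t_s)/d_η)^r; equivalently, E_{K^r}[(f_*)^s] = (q^{2n}−1)^{s/2}·Σ_T p_s(T)·(χ^η(T)/d_η)^r, where T ranges over the conjugacy classes of G and p_s(T) is the probability that the product of s independent uniformly random transvections lies in T. (Since the two conjugacy classes C_1, C_2 = C_1^{−1} of transvections each have size (q^{2n}−1)/2, f_*(ρ) agrees with (|C_1|^{1/2}χ^ρ(C_1)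 + |C_2|^{1/2}χ^ρ(C_2))/(√2·d_ρ).) -/
open CategoryTheory MonoidalCategory Finset

noncomputable section

/-- `g` is a symplectic transvection with respect to the alternating form `B`:
`g : x ↦ x + α(v|x)v` for some `α ∈ F^×` and `0 ≠ v`. -/
def IsSympTransvection {F : Type} [Field F] {m : ℕ}
    (B : (Fin m → F) → (Fin m → F) → F) (g : (Matrix (Fin m) (Fin m) F)ˣ) : Prop :=
  ∃ α : F, α ≠ 0 ∧ ∃ v : Fin m → F, v ≠ 0 ∧
    ∀ x, (g : Matrix (Fin m) (Fin m) F).mulVec x = x + (α * B v x) • v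

/-
Decomposing `λ ⊗ η` shows that each character ratio `ρ ↦ χ^ρ(g) / d_ρ` is an eigenvector of the
tensor product chain, with eigenvalue `χ^η(g) / d_η`; its `r`-step expectation from the trivial
representation is therefore the `r`-th power of this eigenvalue. By Schur's lemma `∑ t ∈ Tr, ρ(t)`
is scalar on an irreducible `ρ`, since `Tr` is closed under conjugation, so that `(∑ t ∈ Tr,
χ^ρ(t) / d_ρ) ^ s` is the sum of the character ratios at the products of `s` elements of `Tr`, to
which the first remark applies. The transvections are counted by their parameters: `(α, v)` and
`(β, w)` give the same one exactly when `(β, w) = (α c⁻², c v)` for some `c ≠ 0`.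
-/

universe u v

section Splitting

open ShortComplex

theorem finrank_obj_X₂_of_splitting {k : Type*} [Field k] {C : Type*} [Category* C]
    [Preadditive C] {S : ShortComplex C} (σ : S.Splitting) (F : C ⥤ ModuleCat k) [F.Additive]
    [Module.Finite k (F.obj S.X₁)] [Module.Finite k (F.obj S.X₃)] :
    Module.finrank k (F.obj S.X₂) =
      Module.finrank k (F.obj S.X₁) + Module.finrank k (F.obj S.X₃) :=
  have : Module.Finite k (S.map F).X₁ := ‹Module.Finite k (F.obj S.X₁)›
  have : Module.Finite k (S.map F).X₃ := ‹Module.Finite k (F.obj S.X₃)›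
  ModuleCat.free_shortExact_finrank_add (σ.map F).shortExact rfl rfl

variable {k : Type u} [Field k] {G : Type v} [Monoid G] {S : ShortComplex (FDRep k G)}

theorem finrank_X₂_of_splitting (σ : S.Splitting) :
    Module.finrank k S.X₂ = Module.finrank k S.X₁ + Module.finrank k S.X₃ := by
  let F : FDRep k G ⥤ ModuleCat k := Action.forget _ G ⋙ forget₂ (FGModuleCat k) (ModuleCat k)
  have (W : FDRep k G) : Module.Finite k (F.obj W) := inferInstanceAs (Module.Finite k W)
  exact finrank_obj_X₂_of_splitting σ F

theorem finrank_hom_X₂_of_splitting (σ : S.Splitting) (V : FDRep k G) :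
    Module.finrank k (V ⟶ S.X₂) = Module.finrank k (V ⟶ S.X₁) + Module.finrank k (V ⟶ S.X₃) := by
  have (W : FDRep k G) : Module.Finite k (((linearCoyoneda k _).obj (.op V)).obj W) :=
    inferInstanceAs (FiniteDimensional k (V ⟶ W))
  exact finrank_obj_X₂_of_splitting σ ((linearCoyoneda k _).obj (.op V))

theorem trace_retraction_section_eq_character {A W : FDRep k G} (i : A ⟶ W) (p : W ⟶ A)
    (h : i ≫ p = 𝟙 A) (g : G) :
    LinearMap.trace k W (W.ρ g ∘ₗ (i.hom.hom.hom ∘ₗ p.hom.hom.hom)) = A.character g := by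
  have hcomm : W.ρ g ∘ₗ i.hom.hom.hom = i.hom.hom.hom ∘ₗ A.ρ g :=
    (congrArg (fun f => f.hom.hom) (i.comm g)).symm
  have hid : p.hom.hom.hom ∘ₗ i.hom.hom.hom = LinearMap.id :=
    congrArg (fun f => f.hom.hom.hom) h
  rw [← LinearMap.comp_assoc, hcomm, LinearMap.trace_comp_comm', ← LinearMap.comp_assoc, hid,
    LinearMap.id_comp]
  rfl

theorem character_X₂_of_splitting (σ : S.Splitting) (g : G) :
    S.X₂.character g = S.X₁.character g + S.X₃.character g := by
  have hid : S.f.hom.hom.hom ∘ₗ σ.r.hom.hom.hom + σ.s.hom.hom.hom ∘ₗ S.g.hom.hom.hom =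
      LinearMap.id := congrArg (fun f => f.hom.hom.hom) σ.id
  rw [← trace_retraction_section_eq_character S.f σ.r σ.f_r,
    ← trace_retraction_section_eq_character σ.s S.g σ.s_g, ← map_add, ← LinearMap.comp_add, hid,
    LinearMap.comp_id]
  rfl

end Splitting

section Reducibility

variable {k : Type u} [Field k]

theorem isZero_iff_finrank_eq_zero {G : Type v} [Monoid G] (W : FDRep k G) :
    Limits.IsZero W ↔ Module.finrank k W = 0 := by
  rw [Limits.IsZero.iff_id_eq_zero]
  refine ⟨fun h => ?_, fun h => ?_⟩
  · have hid : (LinearMap.id : W →ₗ[k] W) = 0 := congrArg (fun f => f.hom.hom.hom) h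
    exact Module.finrank_zero_iff.mpr (subsingleton_of_forall_eq 0 (LinearMap.congr_fun hid))
  · have := Module.finrank_zero_iff.mp h
    ext x
    exact Subsingleton.elim _ _

variable {G : Type u} [Group G] [Finite G] [NeZero (Nat.card G : k)]

theorem exists_splitting_of_not_simple {W : FDRep k G} (hzero : ¬ Limits.IsZero W)
    (hsimple : ¬ Simple W) :
    ∃ (S : ShortComplex (FDRep k G)) (_ : S.Splitting), S.X₂ = W ∧
      ¬ Limits.IsZero S.X₁ ∧ ¬ Limits.IsZero S.X₃ := by
  obtain ⟨A, f, hmono, hf, hiso⟩ :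
      ∃ (A : FDRep k G) (f : A ⟶ W), Mono f ∧ f ≠ 0 ∧ ¬ IsIso f := by
    by_contra! hcon
    refine hsimple ⟨fun {A} f hf => ⟨?_, hcon A f hf⟩⟩
    rintro hi rfl
    exact hzero ((Limits.isIsoZero_iff_source_target_isZero A W).mp hi).2
  let S : ShortComplex (FDRep k G) := .mk f (Limits.cokernel.π f) (Limits.cokernel.condition f)
  have hS : S.ShortExact := { exact := ShortComplex.exact_cokernel f }
  refine ⟨S, hS.splittingOfInjective, rfl, fun h => hf (h.eq_zero_of_src f), fun h => hiso ?_⟩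
  have : Epi f := Preadditive.epi_of_isZero_cokernel f h
  exact isIso_of_mono_of_epi f

theorem induction_on_splitting {P : FDRep k G → Prop}
    (zero : ∀ W, Limits.IsZero W → P W) (simple : ∀ W, Simple W → P W)
    (splitting : ∀ S : ShortComplex (FDRep k G), S.Splitting → P S.X₁ → P S.X₃ → P S.X₂)
    (W : FDRep k G) : P W := by
  induction hN : Module.finrank k W using Nat.strong_induction_on generalizing W with
  | _ N ih =>
  by_cases hzero : Limits.IsZero W
  · exact zero W hzero
  by_cases hsimple : Simple W
  · exact simple W hsimple
  obtain ⟨S, σ, rfl, h₁, h₃⟩ := exists_splitting_of_not_simple hzero hsimple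
  rw [isZero_iff_finrank_eq_zero] at h₁ h₃
  have hadd := finrank_X₂_of_splitting σ
  exact splitting S σ (ih _ (by omega) S.X₁ rfl) (ih _ (by omega) S.X₃ rfl)

end Reducibility

/-- A family `rep` of representations which lists the irreducible ones up to isomorphism, each
exactly once, so that its index type stands for `Irr(G)`. -/
structure IsIrrSystem {k : Type u} [Field k] {G : Type v} [Monoid G] {ι : Type*}
    (rep : ι → FDRep k G) : Prop where
  simple (i : ι) : Simple (rep i)
  complete (V : FDRep k G) : Simple V → ∃ i, Nonempty (V ≅ rep i)
  injective (i j : ι) : Nonempty (rep i ≅ rep j) → i = j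

namespace IsIrrSystem

variable {k : Type u} [Field k] [IsAlgClosed k] {ι : Type*}

theorem finrank_hom_of_iso {G : Type v} [Monoid G] [DecidableEq ι] {rep : ι → FDRep k G}
    (hrep : IsIrrSystem rep) {W : FDRep k G} {j : ι} (e : W ≅ rep j) (i : ι) :
    Module.finrank k (rep i ⟶ W) = if i = j then 1 else 0 := by
  have := hrep.simple i
  have := hrep.simple j
  have := Simple.of_iso e
  classical
  rw [FDRep.finrank_hom_simple_simple]
  exact if_congr ⟨fun ⟨f⟩ => hrep.injective i j ⟨f ≪≫ e⟩, by rintro rfl; exact ⟨e.symm⟩⟩ rfl rfl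

theorem character_eq_sum_finrank_hom {G : Type u} [Group G] [Finite G] [NeZero (Nat.card G : k)]
    [Fintype ι] {rep : ι → FDRep k G} (hrep : IsIrrSystem rep) (W : FDRep k G) (g : G) :
    W.character g = ∑ i, (Module.finrank k (rep i ⟶ W) : k) * (rep i).character g := by
  classical
  induction W using induction_on_splitting with
  | zero W hW =>
    have (i : ι) : Subsingleton (rep i ⟶ W) := ⟨fun _ _ => hW.eq_of_tgt _ _⟩
    have := Module.finrank_zero_iff.mp ((isZero_iff_finrank_eq_zero W).mp hW)
    simp [FDRep.character, Subsingleton.elim (W.ρ g) 0, Module.finrank_zero_of_subsingleton]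
  | simple W hW =>
    obtain ⟨j, ⟨e⟩⟩ := hrep.complete W hW
    simp [hrep.finrank_hom_of_iso e, FDRep.char_iso e]
  | splitting S σ h₁ h₃ =>
    simp only [character_X₂_of_splitting σ, h₁, h₃, finrank_hom_X₂_of_splitting σ, Nat.cast_add,
      add_mul, sum_add_distrib]

end IsIrrSystem

theorem sum_piFinset_fin_succ {α M : Type*} [AddCommMonoid M] (T : Finset α) {s : ℕ}
    (f : (Fin (s + 1) → α) → M) :
    ∑ t ∈ Fintype.piFinset (fun _ => T), f t =
      ∑ t ∈ Fintype.piFinset (fun _ : Fin s => T), ∑ a ∈ T, f (Fin.cons a t) := by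
  have h := filter_piFinset_eq_map_consEquiv (fun _ : Fin (s + 1) => T) (fun _ => True)
  simp only [filter_true] at h
  rw [h, sum_map, sum_product_right]
  rfl

theorem commute_sum_of_conj_mem {G R : Type*} [Group G] [Semiring R] (ρ : G →* R)
    {T : Finset G} (hT : ∀ g, ∀ t ∈ T, g * t * g⁻¹ ∈ T) (g : G) :
    Commute (∑ t ∈ T, ρ t) (ρ g) := by
  simp only [Commute, SemiconjBy, sum_mul, mul_sum, ← map_mul]
  refine sum_nbij' (fun t => g⁻¹ * t * g) (fun t => g * t * g⁻¹)
    (fun t ht => ?_) (hT g) ?_ ?_ ?_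
  · simpa only [inv_inv] using hT g⁻¹ t ht
  all_goals
    intros
    simp only [mul_assoc, mul_inv_cancel, inv_mul_cancel, mul_one, mul_inv_cancel_left,
      inv_mul_cancel_left]

theorem pow_mulVec_of_mulVec_eq_smul {n R : Type*} [Fintype n] [DecidableEq n] [CommSemiring R]
    {M : Matrix n n R} {v : n → R} {c : R} (h : M.mulVec v = c • v) (r : ℕ) :
    (M ^ r).mulVec v = c ^ r • v := by
  induction r with
  | zero => simp
  | succ r ih =>
    rw [pow_succ, ← Matrix.mulVec_mulVec, h, Matrix.mulVec_smul, ih, smul_smul, pow_succ']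

section CharacterRatio

variable {k : Type u} [Field k]

/-- The character ratio `χ(g) / d`, where `d` is the dimension of the representation. -/
def characterRatio {G : Type v} [Monoid G] (V : FDRep k G) (g : G) : k :=
  V.character g / Module.finrank k V

theorem finrank_cast_ne_zero_of_simple [CharZero k] {G : Type v} [Monoid G] (V : FDRep k G)
    [Simple V] : (Module.finrank k V : k) ≠ 0 :=
  Nat.cast_ne_zero.mpr ((isZero_iff_finrank_eq_zero V).not.mp (Simple.not_isZero V))

theorem characterRatio_one [CharZero k] {G : Type v} [Monoid G] (V : FDRep k G) [Simple V] :
    characterRatio V 1 = 1 := by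
  rw [characterRatio, FDRep.char_one, div_self (finrank_cast_ne_zero_of_simple V)]

theorem exists_eq_smul_one_of_commute [IsAlgClosed k] {G : Type v} [Monoid G] (V : FDRep k G)
    [Simple V] (φ : Module.End k V) (hφ : ∀ g, Commute φ (V.ρ g)) : ∃ c : k, φ = c • 1 := by
  let φHom : V ⟶ V := ⟨InducedCategory.homMk (ModuleCat.ofHom φ), fun g => by
    ext x
    exact LinearMap.congr_fun (hφ g) x⟩
  obtain ⟨c, hc⟩ := endomorphism_simple_eq_smul_id k φHom
  exact ⟨c, (congrArg (fun f => f.hom.hom.hom) hc).symm⟩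

variable [IsAlgClosed k] [CharZero k] {G : Type v} [Group G] (V : FDRep k G) [Simple V]
  {T : Finset G}

theorem sum_ρ_eq_sum_characterRatio_smul (hT : ∀ g, ∀ t ∈ T, g * t * g⁻¹ ∈ T) :
    ∑ t ∈ T, V.ρ t = (∑ t ∈ T, characterRatio V t) • (1 : Module.End k V) := by
  obtain ⟨c, hc⟩ := exists_eq_smul_one_of_commute V _ (commute_sum_of_conj_mem V.ρ hT)
  have htrace : ∑ t ∈ T, V.character t = c * Module.finrank k V := by
    have := congrArg (LinearMap.trace k V) hc
    rwa [map_sum, map_smul, LinearMap.trace_one] at this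
  simp only [characterRatio]
  rw [hc, ← sum_div, htrace, mul_div_cancel_right₀ c (finrank_cast_ne_zero_of_simple V)]

theorem sum_characterRatio_mul (hT : ∀ g, ∀ t ∈ T, g * t * g⁻¹ ∈ T) (g : G) :
    ∑ t ∈ T, characterRatio V (t * g) = (∑ t ∈ T, characterRatio V t) * characterRatio V g := by
  have htrace : ∑ t ∈ T, V.character (t * g) =
      (∑ t ∈ T, characterRatio V t) * V.character g := by
    simp only [FDRep.character, map_mul, ← map_sum, ← sum_mul]
    rw [sum_ρ_eq_sum_characterRatio_smul V hT, smul_one_mul, map_smul, smul_eq_mul]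
  rw [characterRatio, mul_div_assoc', ← htrace, sum_div]
  rfl

theorem sum_characterRatio_pow (hT : ∀ g, ∀ t ∈ T, g * t * g⁻¹ ∈ T) (s : ℕ) :
    (∑ t ∈ T, characterRatio V t) ^ s =
      ∑ t ∈ Fintype.piFinset (fun _ : Fin s => T), characterRatio V (List.ofFn t).prod := by
  induction s with
  | zero => simp [characterRatio_one]
  | succ s ih =>
    simp only [sum_piFinset_fin_succ, List.ofFn_cons, List.prod_cons, sum_characterRatio_mul V hT,
      ← mul_sum, ← ih, pow_succ']

end CharacterRatio

section TensorChain

variable {G : Type} [Group G] [Finite G] {ι : Type} [Fintype ι] {rep : ι → FDRep ℂ G}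

theorem tensorChain_mulVec_characterRatio (hrep : IsIrrSystem rep) (η : FDRep ℂ G) (g : G) :
    ((tensorChain rep η).map Complex.ofReal).mulVec (fun i => characterRatio (rep i) g) =
      characterRatio η g • fun i => characterRatio (rep i) g := by
  ext l
  have hchar := hrep.character_eq_sum_finrank_hom (rep l ⊗ η) g
  rw [FDRep.char_tensor, Pi.mul_apply] at hchar
  rw [Pi.smul_apply, smul_eq_mul, mul_comm, characterRatio, characterRatio, div_mul_div_comm,
    hchar, sum_div]
  refine sum_congr rfl fun i _ => ?_
  have := hrep.simple i
  have := finrank_cast_ne_zero_of_simple (rep i)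
  simp only [Matrix.map_apply, tensorChain, multIn, characterRatio]
  push_cast
  field_simp

variable [DecidableEq ι]

theorem sum_tensorChain_pow_mul_characterRatio (hrep : IsIrrSystem rep) (η : FDRep ℂ G) (g : G)
    (r : ℕ) (l : ι) :
    ∑ i, ((tensorChain rep η ^ r) l i : ℂ) * characterRatio (rep i) g =
      characterRatio η g ^ r * characterRatio (rep l) g := by
  have hmap : (tensorChain rep η ^ r).map Complex.ofReal =
      (tensorChain rep η).map Complex.ofReal ^ r :=
    Matrix.map_pow (tensorChain rep η) Complex.ofRealHom r
  have h := pow_mulVec_of_mulVec_eq_smul (tensorChain_mulVec_characterRatio hrep η g) r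
  rw [← hmap] at h
  exact congrFun h l

theorem sum_tensorChain_pow_mul_sum_characterRatio_pow (hrep : IsIrrSystem rep) (η : FDRep ℂ G)
    {triv : ι} (htriv : ∀ g, (rep triv).character g = 1) {T : Finset G}
    (hT : ∀ g, ∀ t ∈ T, g * t * g⁻¹ ∈ T) (r s : ℕ) :
    ∑ i, ((tensorChain rep η ^ r) triv i : ℂ) * (∑ t ∈ T, characterRatio (rep i) t) ^ s =
      ∑ t ∈ Fintype.piFinset (fun _ : Fin s => T), characterRatio η (List.ofFn t).prod ^ r := by
  have := hrep.simple
  have hratio (g : G) : characterRatio (rep triv) g = 1 := by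
    rw [characterRatio, ← FDRep.char_one, htriv, htriv, div_one]
  simp only [sum_characterRatio_pow _ hT, mul_sum]
  rw [sum_comm]
  simp only [sum_tensorChain_pow_mul_characterRatio hrep, hratio, mul_one]

end TensorChain

section Transvections

variable {F V : Type*} [Field F] [AddCommGroup V] [Module F V] (B : LinearMap.BilinForm F V)

/-- The symplectic transvections `x ↦ x + α (v|x) v` of a vector space with a bilinear form
`(·|·) = B`, as linear endomorphisms, so that they can be counted without reference to the
isometry group. -/
def sympTransvections : Set (Module.End F V) :=
  {T | ∃ α : F, α ≠ 0 ∧ ∃ v : V, v ≠ 0 ∧ T = LinearMap.transvection (α • B v) v}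

variable {B}

theorem transvection_smul_units (α : F) (v : V) (c : Fˣ) :
    LinearMap.transvection ((α / (c : F) ^ 2) • B ((c : F) • v)) ((c : F) • v) =
      LinearMap.transvection (α • B v) v := by
  ext x
  simp only [LinearMap.transvection.apply, map_smul, LinearMap.smul_apply, smul_eq_mul, smul_smul]
  congr 2
  field_simp [c.ne_zero]

theorem exists_eq_smul_of_transvection_eq (hnd : B.SeparatingLeft) {α β : F} {v w : V}
    (hβ : β ≠ 0) (hv : v ≠ 0) (hw : w ≠ 0)
    (h : LinearMap.transvection (α • B v) v = LinearMap.transvection (β • B w) w) :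
    ∃ c : Fˣ, w = (c : F) • v ∧ β = α / (c : F) ^ 2 := by
  have hB (u : V) (hu : u ≠ 0) : ∃ x, B u x ≠ 0 := by
    by_contra! hcon
    exact hu (hnd u hcon)
  have happly (x : V) : (α * B v x) • v = (β * B w x) • w :=
    add_left_cancel (LinearMap.congr_fun h x)
  obtain ⟨x, hx⟩ := hB w hw
  obtain ⟨c, rfl⟩ : ∃ c : F, w = c • v :=
    ⟨(β * B w x)⁻¹ * (α * B v x), by
      rw [mul_smul, happly, inv_smul_smul₀ (mul_ne_zero hβ hx)]⟩
  have hc : c ≠ 0 := left_ne_zero_of_smul hw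
  obtain ⟨y, hy⟩ := hB v hv
  refine ⟨Units.mk0 c hc, rfl, (eq_div_iff (pow_ne_zero 2 hc)).mpr (mul_right_cancel₀ hy ?_)⟩
  have hcoeff := happly y
  rw [smul_smul, map_smul, LinearMap.smul_apply, smul_eq_mul] at hcoeff
  linear_combination -smul_left_injective F hv hcoeff

theorem ncard_sympTransvections [Finite F] [Finite V] (hnd : B.SeparatingLeft) :
    (sympTransvections B).ncard = Nat.card V - 1 := by
  choose α hα v hv hT using fun T : sympTransvections B => T.2
  let φ (p : sympTransvections B × Fˣ) : Fˣ × {w : V // w ≠ 0} :=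
    (Units.mk0 (α p.1) (hα p.1) / p.2 ^ 2, ⟨(p.2 : F) • v p.1, smul_ne_zero p.2.ne_zero (hv p.1)⟩)
  have hφ (p : sympTransvections B × Fˣ) :
      LinearMap.transvection (((φ p).1 : F) • B (φ p).2) ((φ p).2 : V) = p.1 := by
    rw [hT p.1, ← transvection_smul_units (α p.1) (v p.1) p.2]
    simp [φ]
  have hinj : Function.Injective φ := by
    rintro ⟨T, c⟩ ⟨T', c'⟩ h
    have hTT' := hφ (T, c)
    rw [h, hφ] at hTT'
    obtain rfl : T' = T := Subtype.ext hTT'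
    have hc : (c : F) • v T' = (c' : F) • v T' := congrArg (fun p => (p.2 : V)) h
    rw [Units.ext (smul_left_injective F (hv T') hc)]
  have hsurj : Function.Surjective φ := by
    rintro ⟨β, w, hw⟩
    let T : sympTransvections B := ⟨_, β, β.ne_zero, w, hw, rfl⟩
    obtain ⟨c, hcw, hcβ⟩ :=
      exists_eq_smul_of_transvection_eq hnd β.ne_zero (hv T) hw (hT T).symm
    exact ⟨(T, c), Prod.ext (Units.ext (by simp [φ, hcβ])) (Subtype.ext hcw.symm)⟩
  have hcard := Nat.card_eq_of_bijective φ ⟨hinj, hsurj⟩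
  rw [Nat.card_prod, Nat.card_prod, mul_comm] at hcard
  rw [← Nat.card_coe_set_eq, Nat.eq_of_mul_eq_mul_left Nat.card_pos hcard]
  have := Set.ncard_compl ({0} : Set V)
  rwa [Set.ncard_singleton] at this

theorem transvection_isometry (hB : B.IsAlt) (α : F) (v x y : V) :
    B (LinearMap.transvection (α • B v) v x) (LinearMap.transvection (α • B v) v y) = B x y := by
  simp only [LinearMap.transvection.apply, map_add, map_smul, LinearMap.add_apply,
    LinearMap.smul_apply, smul_eq_mul, hB v, ← hB.neg_eq v x]
  ring

end Transvections

section MatrixTransvections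

variable {F : Type} [Field F] {m : ℕ}

theorem exists_mem_formIsometry_of_isometry {B : (Fin m → F) → (Fin m → F) → F}
    (e : (Fin m → F) ≃ₗ[F] (Fin m → F)) (he : ∀ x y, B (e x) (e y) = B x y) :
    ∃ g : formIsometry B, (g : (Matrix (Fin m) (Fin m) F)ˣ).val.mulVecLin = e := by
  let g := Matrix.GeneralLinearGroup.toLin.symm (.ofLinearEquiv e)
  have hg : Matrix.mulVecLin g.val = e :=
    congrArg Units.val (Matrix.GeneralLinearGroup.toLin.apply_symm_apply (.ofLinearEquiv e))
  refine ⟨⟨g, fun x y => ?_⟩, hg⟩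
  have (z : Fin m → F) : g.val.mulVec z = e z := LinearMap.congr_fun hg z
  rw [this, this, he]

theorem IsSympTransvection.conj {B : (Fin m → F) → (Fin m → F) → F} (g : formIsometry B)
    {t : formIsometry B} (ht : IsSympTransvection B (t : (Matrix (Fin m) (Fin m) F)ˣ)) :
    IsSympTransvection B ((g * t * g⁻¹ : formIsometry B) : (Matrix (Fin m) (Fin m) F)ˣ) := by
  obtain ⟨α, hα, v, hv, h⟩ := ht
  obtain ⟨g, hg⟩ := g
  have hcancel (x : Fin m → F) : g.val.mulVec (g⁻¹.val.mulVec x) = x := by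
    rw [Matrix.mulVec_mulVec, Units.mul_inv, Matrix.one_mulVec]
  refine ⟨α, hα, g.val.mulVec v, fun h0 => hv ?_, fun x => ?_⟩
  · exact Matrix.mulVec_injective_of_isUnit g.isUnit (h0.trans (Matrix.mulVec_zero _).symm)
  · have hB := hg v (g⁻¹.val.mulVec x)
    rw [hcancel] at hB
    simp only [Subgroup.coe_mul, Subgroup.coe_inv, Units.val_mul, ← Matrix.mulVec_mulVec]
    rw [h, Matrix.mulVec_add, Matrix.mulVec_smul, hcancel, hB]

variable {B : LinearMap.BilinForm F (Fin m → F)}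

theorem isSympTransvection_iff_mulVecLin_mem (g : (Matrix (Fin m) (Fin m) F)ˣ) :
    IsSympTransvection (fun x y => B x y) g ↔ g.val.mulVecLin ∈ sympTransvections B := by
  simp only [IsSympTransvection, sympTransvections, Set.mem_ofPred_eq, LinearMap.ext_iff]
  rfl

theorem image_mulVecLin_eq_sympTransvections (hB : B.IsAlt) :
    (fun g : formIsometry (fun x y => B x y) =>
        (g : (Matrix (Fin m) (Fin m) F)ˣ).val.mulVecLin) ''
      {g | IsSympTransvection (fun x y => B x y) g} = sympTransvections B := by
  refine Set.Subset.antisymm ?_ fun T hT => ?_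
  · rintro _ ⟨g, hg, rfl⟩
    exact (isSympTransvection_iff_mulVecLin_mem _).mp hg
  · obtain ⟨α, -, v, -, rfl⟩ := id hT
    have hfix : (α • B v) v = 0 := by rw [LinearMap.smul_apply, hB, smul_zero]
    obtain ⟨g, hg⟩ := exists_mem_formIsometry_of_isometry (B := fun x y => B x y)
      (LinearEquiv.transvection hfix) (transvection_isometry hB α v)
    rw [LinearEquiv.transvection.coe_toLinearMap] at hg
    exact ⟨g, (isSympTransvection_iff_mulVecLin_mem _).mpr (hg ▸ hT), hg⟩

theorem ncard_isSympTransvection [Fintype F] (hB : B.IsAlt) (hnd : B.SeparatingLeft) :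
    {g : formIsometry (fun x y => B x y) | IsSympTransvection (fun x y => B x y) g}.ncard =
      Fintype.card F ^ m - 1 := by
  have hinj : Function.Injective fun g : formIsometry (fun x y => B x y) =>
      (g : (Matrix (Fin m) (Fin m) F)ˣ).val.mulVecLin := fun _ _ h =>
    Subtype.ext (Units.ext (Matrix.ext_of_mulVec_single fun i => LinearMap.congr_fun h _))
  rw [← Set.ncard_image_of_injective _ hinj, image_mulVecLin_eq_sympTransvections hB,
    ncard_sympTransvections hnd]
  simp

end MatrixTransvections

theorem sp_odd_fstar_moments_general {F : Type} [Field F] [Fintype F] {m : ℕ} (hm : 0 < m)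
    (B : LinearMap.BilinForm F (Fin m → F)) (hB : B.IsAlt) (hnd : B.SeparatingLeft)
    {ι : Type} [Fintype ι] [DecidableEq ι] {rep : ι → FDRep ℂ ↥(formIsometry fun x y => B x y)}
    (hrep : IsIrrSystem rep) {triv : ι} (htriv : ∀ g, (rep triv).character g = 1)
    (η : FDRep ℂ ↥(formIsometry fun x y => B x y))
    {Tr : Finset ↥(formIsometry fun x y => B x y)}
    (hTr : ∀ g : ↥(formIsometry fun x y => B x y), g ∈ Tr ↔
      IsSympTransvection (fun x y => B x y) (g : (Matrix (Fin m) (Fin m) F)ˣ))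
    (r s : ℕ) :
    Tr.card = Fintype.card F ^ m - 1 ∧
    ∑ ρ, ((tensorChain rep η ^ r) triv ρ : ℂ) *
        ((∑ t ∈ Tr, (rep ρ).character t) /
          ((Module.finrank ℂ (rep ρ) : ℂ) *
            (Real.sqrt ((Fintype.card F : ℝ) ^ m - 1) : ℝ))) ^ s =
      ((Real.sqrt ((Fintype.card F : ℝ) ^ m - 1) ^ s : ℝ) : ℂ) /
          ((((Fintype.card F : ℝ) ^ m - 1 : ℝ)) : ℂ) ^ s *
        ∑ t ∈ Fintype.piFinset (fun _ : Fin s => Tr),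
          (η.character (List.ofFn t).prod / (Module.finrank ℂ η : ℂ)) ^ r := by
  refine ⟨?_, ?_⟩
  · rw [← ncard_isSympTransvection hB hnd, ← Set.ncard_coe_finset]
    exact congrArg Set.ncard (Set.ext hTr)
  have hconj (g) (t) (ht : t ∈ Tr) : g * t * g⁻¹ ∈ Tr := (hTr _).mpr (((hTr t).mp ht).conj g)
  set x : ℝ := (Fintype.card F : ℝ) ^ m - 1
  have hx : 0 < x :=
    sub_pos.mpr (one_lt_pow₀ (Nat.one_lt_cast.mpr Fintype.one_lt_card) hm.ne')
  have hsqrt : (√x : ℂ) ≠ 0 := Complex.ofReal_ne_zero.mpr (Real.sqrt_ne_zero'.mpr hx)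
  have hscale : ((√x ^ s : ℝ) : ℂ) / (x : ℂ) ^ s = (√x : ℂ)⁻¹ ^ s := by
    have hsq : (x : ℂ) = (√x : ℂ) ^ 2 := by exact_mod_cast (Real.sq_sqrt hx.le).symm
    rw [hsq, Complex.ofReal_pow, ← div_pow]
    field_simp
  have hmoments := sum_tensorChain_pow_mul_sum_characterRatio_pow hrep η htriv hconj r s
  simp only [characterRatio, ← sum_div] at hmoments
  rw [hscale, ← hmoments, mul_sum]
  refine sum_congr rfl fun ρ _ => ?_
  rw [← div_div, div_eq_mul_inv _ (√x : ℂ), mul_pow]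
  ring

open scoped Classical in
/-- **Proposition (moments of `f_*` for `Sp_{2n}(q)`, `q ≡ 3 (mod 4)`).**  Let
`q ≡ 3 (mod 4)` be an odd prime power, `B` a nondegenerate alternating bilinear form on
`F_q^{2n}` with isometry group `G = Sp_{2n}(q)`, and `Tr ⊆ G` the set of symplectic
transvections, so `|Tr| = q^{2n} − 1`.  Let `η` be a finite-dimensional complex
representation of `G`, `K` the tensor product Markov chain associated with `η` started at
the trivial representation, and define
`f_*(ρ) = (Σ_{t∈Tr} χ^ρ(t))/(d_ρ·√(q^{2n}−1))`.  Then for all `r, s ≥ 0`,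
`E_{K^r}[(f_*)^s] = (q^{2n}−1)^{s/2}·(q^{2n}−1)^{−s}·
   Σ_{(t_1,…,t_s)∈Tr^s} (χ^η(t_1⋯t_s)/d_η)^r`. -/
theorem sp_odd_fstar_moments {F : Type} [Field F] [Fintype F]
    {q n : ℕ} (hq : Fintype.card F = q) (hq3 : q % 4 = 3) (hn : 1 ≤ n)
    (B : (Fin (2 * n) → F) → (Fin (2 * n) → F) → F)
    (hadd₁ : ∀ x x' y, B (x + x') y = B x y + B x' y)
    (hsmul₁ : ∀ (a : F) (x y : Fin (2 * n) → F), B (a • x) y = a * B x y)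
    (hadd₂ : ∀ x y y', B x (y + y') = B x y + B x y')
    (hsmul₂ : ∀ (a : F) (x y : Fin (2 * n) → F), B x (a • y) = a * B x y)
    (halt : ∀ x, B x x = 0)
    (hnd : ∀ x, (∀ y, B x y = 0) → x = 0)
    {ι : Type} [Fintype ι] [DecidableEq ι]
    (rep : ι → FDRep ℂ ↥(formIsometry B))
    (hsimple : ∀ i, Simple (rep i))
    (hcomplete : ∀ V : FDRep ℂ ↥(formIsometry B), Simple V → ∃ i, Nonempty (V ≅ rep i))
    (hinj : ∀ i j : ι, Nonempty (rep i ≅ rep j) → i = j)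
    (triv : ι) (htriv : ∀ g : ↥(formIsometry B), (rep triv).character g = 1)
    (η : FDRep ℂ ↥(formIsometry B))
    (Tr : Finset ↥(formIsometry B))
    (hTr : ∀ g : ↥(formIsometry B), g ∈ Tr ↔
      IsSympTransvection B (g : (Matrix (Fin (2 * n)) (Fin (2 * n)) F)ˣ))
    (r s : ℕ) :
    Tr.card = q ^ (2 * n) - 1 ∧
    ∑ ρ, ((tensorChain rep η ^ r) triv ρ : ℂ) *
        ((∑ t ∈ Tr, (rep ρ).character t) /
          ((Module.finrank ℂ (rep ρ) : ℂ) *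
            (Real.sqrt ((q : ℝ) ^ (2 * n) - 1) : ℝ))) ^ s =
      ((Real.sqrt ((q : ℝ) ^ (2 * n) - 1) ^ s : ℝ) : ℂ) /
          ((((q : ℝ) ^ (2 * n) - 1 : ℝ)) : ℂ) ^ s *
        ∑ t ∈ Fintype.piFinset (fun _ : Fin s => Tr),
          (η.character (List.ofFn t).prod / (Module.finrank ℂ η : ℂ)) ^ r := by
  subst hq
  exact sp_odd_fstar_moments_general (by omega) (LinearMap.mk₂ F B hadd₁ hsmul₁ hadd₂ hsmul₂)
    halt hnd ⟨hsimple, hcomplete, hinj⟩ htriv η hTr r s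
end
end

section
/- Let q be an even prime power and for each n ≥ 1 let G_n = Sp_{2n}(q) be the isometry group of a nondegenerate alternating bilinear form on F_q^{2n}, and let η_n be a complex representation of G_n whose character satisfies χ^{η_n}(g) = q^{dim ker(g−1)} for all g (the linear Weil representation τ). Let K^r_𝟙 be the distribution on Irr(G_n) after r steps of the tensor product Markov chain associated to η_n started at the trivial representation, and π the Plancherel measure of G_n. Then for every ε > 0 there exists a positive integer c (depending only on ε) such that for all sufficiently large n and r = n − c, one has ‖K^r_𝟙 − π‖_TV ≥ 1 − ε. -/
open CategoryTheory MonoidalCategory Finset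

noncomputable section

/-!
Let `T v : x ↦ x + B(v, x) v` be the symplectic transvection attached to `v`. Conjugation permutes
the `T v`, so by Schur's lemma `∑ v, T v` acts on each irreducible `ρ` by a scalar `ω(ρ)`, and
`ω` is the statistic that separates the two measures. Under the Plancherel measure
`E|ω|² = #{(v, w) | T v = T w} ≤ (q + 1) q^{2n}`. Under `K^r_𝟙` the expectation of a character
ratio `χ_ρ(g) / d_ρ` is `(χ_η(g) / d_η)^r = q^{-r codim ker(g - 1)}`. Since `T v` fixes at least a
hyperplane, `E ω ≥ q^{2n - r}`. For linearly independent `v`, `w` the fixed space of `T w⁻¹ T v` has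
codimension at least two, so only the at most `(q + 1) q^{2n}` dependent pairs contribute to the
bound for the variance of `ω`. For `r = n - c` the mean is at least `q^{n + c}`, whereas both
standard deviations are of order `q^{n + 1/2}`, and a Chebyshev argument concludes.
-/

section TotalVariation

variable {X : Type*} [Fintype X] {P Q : X → ℝ}

theorem tvDist_eq_one_sub_sum_min (hP : ∑ x, P x = 1) (hQ : ∑ x, Q x = 1) :
    tvDist P Q = 1 - ∑ x, min (P x) (Q x) := by
  have hpt (x : X) : |P x - Q x| = P x + Q x - 2 * min (P x) (Q x) := by
    rw [← max_sub_min_eq_abs', ← min_add_max (P x)]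
    ring
  simp only [tvDist, hpt, sum_sub_distrib, sum_add_distrib, ← mul_sum, hP, hQ]
  ring

theorem one_sub_le_tvDist {E : Type*} [PseudoMetricSpace E] {f : X → E} {y z : E} {a b : ℝ}
    (hP₀ : ∀ x, 0 ≤ P x) (hQ₀ : ∀ x, 0 ≤ Q x) (hP : ∑ x, P x = 1) (hQ : ∑ x, Q x = 1)
    (hyz : 0 < dist y z) (ha : ∑ x, P x * dist (f x) y ^ 2 ≤ a)
    (hb : ∑ x, Q x * dist (f x) z ^ 2 ≤ b) :
    1 - 2 * (a + b) / dist y z ^ 2 ≤ tvDist P Q := by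
  -- `f x` cannot be close to both `y` and `z`, so second moments control the overlap of `P`, `Q`.
  have hpt (x : X) : min (P x) (Q x) * dist y z ^ 2 ≤
      2 * (P x * dist (f x) y ^ 2 + Q x * dist (f x) z ^ 2) := by
    have hmin : 0 ≤ min (P x) (Q x) := le_min (hP₀ x) (hQ₀ x)
    calc min (P x) (Q x) * dist y z ^ 2
        ≤ min (P x) (Q x) * (dist (f x) y + dist (f x) z) ^ 2 := by
          gcongr
          exact dist_triangle_left y z (f x)
      _ ≤ min (P x) (Q x) * (2 * (dist (f x) y ^ 2 + dist (f x) z ^ 2)) := by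
          gcongr
          exact add_sq_le
      _ = 2 * (min (P x) (Q x) * dist (f x) y ^ 2 + min (P x) (Q x) * dist (f x) z ^ 2) := by
          ring
      _ ≤ 2 * (P x * dist (f x) y ^ 2 + Q x * dist (f x) z ^ 2) := by
          gcongr
          · exact min_le_left _ _
          · exact min_le_right _ _
  have hsum : (∑ x, min (P x) (Q x)) * dist y z ^ 2 ≤ 2 * (a + b) := by
    rw [sum_mul]
    refine (sum_le_sum fun x _ => hpt x).trans ?_
    rw [← mul_sum, sum_add_distrib]
    gcongr
  rw [tvDist_eq_one_sub_sum_min hP hQ, sub_le_sub_iff_left, le_div_iff₀ (by positivity)]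
  exact hsum

open scoped RealInnerProductSpace in
theorem sum_mul_dist_mean_sq {E : Type*} [NormedAddCommGroup E] [InnerProductSpace ℝ E]
    {f : X → E} {y : E} (hP : ∑ x, P x = 1) (hy : ∑ x, P x • f x = y) :
    ∑ x, P x * dist (f x) y ^ 2 = ∑ x, P x * ‖f x‖ ^ 2 - ‖y‖ ^ 2 := by
  have hcross : ∑ x, P x * ⟪f x, y⟫ = ‖y‖ ^ 2 := by
    simp only [← real_inner_smul_left, ← sum_inner, hy, real_inner_self_eq_norm_sq]
  have hpt (x : X) : P x * dist (f x) y ^ 2 =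
      P x * ‖f x‖ ^ 2 - 2 * (P x * ⟪f x, y⟫) + P x * ‖y‖ ^ 2 := by
    rw [dist_eq_norm, norm_sub_sq_real]
    ring
  simp only [hpt, sum_add_distrib, sum_sub_distrib, ← mul_sum, ← sum_mul, hcross, hP]
  ring

end TotalVariation

section Characters

theorem exists_isCompl_ne_top_of_not_isSimpleOrder {α : Type*} [Lattice α] [BoundedOrder α]
    [ComplementedLattice α] [Nontrivial α] (h : ¬ IsSimpleOrder α) :
    ∃ a b : α, IsCompl a b ∧ a ≠ ⊤ ∧ b ≠ ⊤ := by
  obtain ⟨a, ha_bot, ha_top⟩ : ∃ a : α, a ≠ ⊥ ∧ a ≠ ⊤ := by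
    by_contra! hall
    exact h ⟨fun a => or_iff_not_imp_left.mpr (hall a)⟩
  obtain ⟨b, hab⟩ := exists_isCompl a
  refine ⟨a, b, hab, ha_top, ?_⟩
  rintro rfl
  exact ha_bot (by simpa using hab.inf_eq_bot)

theorem character_eq_add_of_isCompl {k G V : Type*} [Field k] [Monoid G] [AddCommGroup V]
    [Module k V] [FiniteDimensional k V] {ρ : Representation k G V}
    {σ τ : Subrepresentation ρ} (h : IsCompl σ τ) (g : G) :
    ρ.character g = σ.toRepresentation.character g + τ.toRepresentation.character g := by
  have hcompl : IsCompl σ.toSubmodule τ.toSubmodule :=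
    IsCompl.of_eq (congrArg Subrepresentation.toSubmodule h.inf_eq_bot)
      (congrArg Subrepresentation.toSubmodule h.sup_eq_top)
  let N : Bool → Submodule k V := fun b => cond b σ.toSubmodule τ.toSubmodule
  have hN : DirectSum.IsInternal N := by
    refine (DirectSum.isInternal_submodule_iff_isCompl N Bool.true_eq_false_eq_False ?_).mpr hcompl
    ext b
    cases b <;> simp
  have hmaps (b : Bool) : Set.MapsTo (ρ g) (N b) (N b) := fun x hx =>
    match b with
    | true => σ.apply_mem_toSubmodule g hx
    | false => τ.apply_mem_toSubmodule g hx
  exact (LinearMap.trace_eq_sum_trace_restrict hN hmaps).trans (Fintype.sum_bool _)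

variable {G : Type} [Group G]

theorem finrank_ne_zero_of_simple (V : FDRep ℂ G) [Simple V] :
    (Module.finrank ℂ V : ℂ) ≠ 0 := by
  rw [Nat.cast_ne_zero]
  intro h
  have : Subsingleton V := Module.finrank_zero_iff.mp h
  refine id_nonzero V ?_
  ext x
  exact Subsingleton.elim _ _

theorem exists_eq_smul_id_of_commute (V : FDRep ℂ G) [Simple V] {X : V →ₗ[ℂ] V}
    (h : ∀ g, X ∘ₗ V.ρ g = V.ρ g ∘ₗ X) : ∃ c : ℂ, X = c • LinearMap.id := by
  let f : V ⟶ V := FDRep.forget₂HomLinearEquiv V V (Rep.ofHom ⟨X, h⟩)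
  obtain ⟨c, hc⟩ := endomorphism_simple_eq_smul_id ℂ f
  exact ⟨c, congrArg (fun φ : V ⟶ V => φ.hom.hom.hom) hc.symm⟩

/-- A family `rep` realising the index type `ι` as the set `Irr(G)`: it lists every irreducible
complex representation of `G` exactly once up to isomorphism. -/
structure IsCompleteIrreps {ι : Type*} (rep : ι → FDRep ℂ G) : Prop where
  simple : ∀ i, Simple (rep i)
  exists_iso : ∀ V : FDRep ℂ G, Simple V → ∃ i, Nonempty (V ≅ rep i)
  eq_of_iso : ∀ i j, Nonempty (rep i ≅ rep j) → i = j

theorem multIn_eq_sum [Fintype G] (ρ W : FDRep ℂ G) :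
    (multIn ρ W : ℂ) =
      (Nat.card G : ℂ)⁻¹ * ∑ g : G, W.character g * ρ.character g⁻¹ :=
  have : Invertible (Nat.card G : ℂ) := invertibleOfNonzero (NeZero.ne _)
  (FDRep.scalar_product_char_eq_finrank_equivariant ρ W).symm

variable [Finite G]

theorem simple_of_isIrreducible {V : Type} [AddCommGroup V] [Module ℂ V]
    [FiniteDimensional ℂ V] (ρ : Representation ℂ G V) [ρ.IsIrreducible] :
    Simple (FDRep.of ρ) := by
  cases nonempty_fintype G
  have : Invertible (Nat.card G : ℂ) := invertibleOfNonzero (NeZero.ne _)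
  rw [FDRep.simple_iff_char_is_norm_one]
  have h := Representation.char_orthonormal ρ ρ
  rw [if_pos ⟨Representation.Equiv.refl ρ⟩, inv_mul_eq_one₀ (NeZero.ne _)] at h
  exact h.symm

theorem exists_character_eq_sum {ι : Type*} [Fintype ι] {rep : ι → FDRep ℂ G}
    (hrep : ∀ V : FDRep ℂ G, Simple V → ∃ i, Nonempty (V ≅ rep i))
    {V : Type} [AddCommGroup V] [Module ℂ V] [FiniteDimensional ℂ V]
    (ρ : Representation ℂ G V) :
    ∃ m : ι → ℕ, ∀ g, ρ.character g = ∑ i, m i * (rep i).character g := by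
  classical
  induction hd : Module.finrank ℂ V using Nat.strong_induction_on generalizing V with
  | _ d ih =>
    by_cases hirr : ρ.IsIrreducible
    · obtain ⟨i, ⟨e⟩⟩ := hrep _ (simple_of_isIrreducible ρ)
      refine ⟨Pi.single i 1, fun g => ?_⟩
      have hchar : ρ.character g = (rep i).character g := congrFun (FDRep.char_iso e) g
      rw [hchar, Finset.sum_eq_single i] <;> simp +contextual
    rcases subsingleton_or_nontrivial V with hV | hV
    · refine ⟨0, fun g => ?_⟩
      simp [Representation.character, Subsingleton.elim (ρ g) 0]
    · have : Nontrivial (Subrepresentation ρ) :=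
        ⟨⊥, ⊤, fun h => bot_ne_top (congrArg Subrepresentation.toSubmodule h)⟩
      obtain ⟨σ, τ, hστ, hσ, hτ⟩ := exists_isCompl_ne_top_of_not_isSimpleOrder hirr
      have hlt (θ : Subrepresentation ρ) (hθ : θ ≠ ⊤) :
          Module.finrank ℂ θ.toSubmodule < d :=
        hd ▸ Submodule.finrank_lt fun h => hθ (Subrepresentation.toSubmodule_injective h)
      obtain ⟨m₁, h₁⟩ := ih _ (hlt σ hσ) σ.toRepresentation rfl
      obtain ⟨m₂, h₂⟩ := ih _ (hlt τ hτ) τ.toRepresentation rfl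
      refine ⟨m₁ + m₂, fun g => ?_⟩
      simp only [character_eq_add_of_isCompl hστ, h₁, h₂, ← Finset.sum_add_distrib,
        Pi.add_apply, Nat.cast_add, add_mul]

theorem character_rightRegular [DecidableEq G] (g : G) :
    (TannakaDuality.FiniteGroup.rightRegular : Representation ℂ G (G → ℂ)).character g =
      if g = 1 then (Nat.card G : ℂ) else 0 := by
  cases nonempty_fintype G
  rw [Representation.character, LinearMap.trace_eq_matrix_trace ℂ (Pi.basisFun ℂ G),
    Matrix.trace]
  simp only [Matrix.diag_apply, LinearMap.toMatrix_apply, Pi.basisFun_apply, Pi.basisFun_repr,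
    TannakaDuality.FiniteGroup.rightRegular_apply, Pi.single_apply, mul_eq_left]
  split_ifs <;> simp

open scoped ComplexOrder Matrix in
theorem exists_posDef_conjTranspose_mul_mul_eq_s13 {n : Type*} [Fintype n] [DecidableEq n]
    (M : G →* Matrix n n ℂ) : ∃ H : Matrix n n ℂ, H.PosDef ∧ ∀ g, (M g)ᴴ * H * M g = H := by
  cases nonempty_fintype G
  have hinj (g : G) : Function.Injective (M g).mulVec :=
    Matrix.mulVec_injective_of_isUnit ((Group.isUnit g).map M)
  refine ⟨∑ h, (M h)ᴴ * M h, Matrix.posDef_sum ⟨1, mem_univ _⟩ fun h _ =>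
    Matrix.PosDef.conjTranspose_mul_self _ (hinj h), fun g => ?_⟩
  conv_rhs => rw [← Equiv.sum_comp (Equiv.mulRight g)]
  rw [mul_sum, sum_mul]
  simp only [Equiv.coe_mulRight, map_mul, Matrix.conjTranspose_mul, mul_assoc]

open scoped ComplexOrder Matrix in
theorem character_inv (V : FDRep ℂ G) (g : G) :
    V.character g⁻¹ = starRingEnd ℂ (V.character g) := by
  let b := Module.finBasis ℂ V
  let M : G →* Matrix _ _ ℂ := (LinearMap.toMatrixAlgEquiv b).toRingEquiv.toMonoidHom.comp V.ρ
  have htrace (h : G) : V.character h = (M h).trace := LinearMap.trace_eq_matrix_trace ℂ b _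
  -- An invariant positive definite form makes `M g⁻¹` conjugate to the adjoint of `M g`.
  obtain ⟨H, hpos, hinv⟩ := exists_posDef_conjTranspose_mul_mul_eq_s13 M
  have hdet : IsUnit H.det := H.isUnit_iff_isUnit_det.mp hpos.isUnit
  have hmul : H * M g⁻¹ = (M g)ᴴ * H := by
    rw [← hinv g, mul_assoc, ← map_mul, mul_inv_cancel, map_one, mul_one, hinv]
  have hconj : M g⁻¹ = H⁻¹ * ((M g)ᴴ * H) := by
    rw [← hmul, Matrix.nonsing_inv_mul_cancel_left _ _ hdet]
  rw [htrace, htrace, hconj, Matrix.trace_mul_comm, Matrix.mul_nonsing_inv_cancel_right _ _ hdet,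
    Matrix.trace_conjTranspose]
  rfl

variable {ι : Type} [Fintype ι] {rep : ι → FDRep ℂ G}

theorem IsCompleteIrreps.character_eq_sum_multIn (hrep : IsCompleteIrreps rep)
    (W : FDRep ℂ G) (g : G) :
    W.character g = ∑ i, multIn (rep i) W * (rep i).character g := by
  classical
  cases nonempty_fintype G
  have : Invertible (Nat.card G : ℂ) := invertibleOfNonzero (NeZero.ne _)
  have := hrep.simple
  obtain ⟨m, hm⟩ := exists_character_eq_sum hrep.exists_iso W.ρ
  replace hm (g : G) : W.character g = ∑ i, m i * (rep i).character g := hm g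
  have horth (i j : ι) : (Nat.card G : ℂ)⁻¹ *
      ∑ g : G, (rep i).character g * (rep j).character g⁻¹ = if i = j then 1 else 0 := by
    rw [FDRep.char_orthonormal]
    exact if_congr ⟨hrep.eq_of_iso i j, fun h => h ▸ ⟨Iso.refl _⟩⟩ rfl rfl
  have hmult (j : ι) : (multIn (rep j) W : ℂ) = m j :=
    calc (multIn (rep j) W : ℂ)
        = ∑ i, m i * ((Nat.card G : ℂ)⁻¹ *
          ∑ g : G, (rep i).character g * (rep j).character g⁻¹) := by
          simp_rw [multIn_eq_sum, hm, sum_mul, mul_sum]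
          rw [sum_comm]
          exact sum_congr rfl fun i _ => sum_congr rfl fun g _ => by ring
      _ = m j := by simp only [horth, mul_ite, mul_one, mul_zero, sum_ite_eq', mem_univ, if_true]
  simp only [hm, hmult]

theorem IsCompleteIrreps.sum_finrank_mul_character [DecidableEq G]
    (hrep : IsCompleteIrreps rep) (g : G) :
    ∑ i, (Module.finrank ℂ (rep i) : ℂ) * (rep i).character g =
      if g = 1 then (Nat.card G : ℂ) else 0 := by
  cases nonempty_fintype G
  let R : FDRep ℂ G :=
    FDRep.of (TannakaDuality.FiniteGroup.rightRegular : Representation ℂ G (G → ℂ))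
  have hR : ∀ g, R.character g = if g = 1 then (Nat.card G : ℂ) else 0 :=
    character_rightRegular
  have hmult (i : ι) : (multIn (rep i) R : ℂ) = Module.finrank ℂ (rep i) := by
    simp [multIn_eq_sum, hR]
  rw [← hR, hrep.character_eq_sum_multIn R g]
  simp only [hmult]

end Characters

section CentralCharacters

variable {G : Type} [Group G]

/-- The character ratio `χ_V(g) / d_V`. -/
def charRatio (V : FDRep ℂ G) (g : G) : ℂ :=
  V.character g / Module.finrank ℂ V

theorem charRatio_one {V : FDRep ℂ G} (hV : (Module.finrank ℂ V : ℂ) ≠ 0) :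
    charRatio V 1 = 1 := by
  rw [charRatio, FDRep.char_one, div_self hV]

theorem charRatio_of_character_eq_one {V : FDRep ℂ G} (hV : ∀ g, V.character g = 1) (g : G) :
    charRatio V g = 1 := by
  rw [charRatio, ← FDRep.char_one, hV, hV, div_one]

theorem charRatio_inv [Finite G] (V : FDRep ℂ G) (g : G) :
    charRatio V g⁻¹ = starRingEnd ℂ (charRatio V g) := by
  rw [charRatio, charRatio, character_inv, map_div₀, map_natCast]

/-- A family of group elements which conjugation by any element of the group merely permutes,
such as an injective enumeration of a union of conjugacy classes. Its sum is central in the group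
algebra. -/
def IsConjInvariant {κ : Type*} (T : κ → G) : Prop :=
  ∀ g, ∃ σ : Equiv.Perm κ, ∀ v, g * T v * g⁻¹ = T (σ v)

variable {κ : Type*} [Fintype κ] {T : κ → G} {V : FDRep ℂ G}

/-- The sum of the character ratios of `V` over the family `T`. For simple `V` and
conjugation-invariant `T` this is the scalar by which `∑ v, T v` acts on `V`. -/
def centralChar (V : FDRep ℂ G) (T : κ → G) : ℂ :=
  ∑ v, charRatio V (T v)

theorem IsConjInvariant.sum_ρ_eq_smul_id [Simple V] (hT : IsConjInvariant T) :
    ∑ v, V.ρ (T v) = centralChar V T • LinearMap.id := by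
  obtain ⟨c, hc⟩ := exists_eq_smul_id_of_commute V (X := ∑ v, V.ρ (T v)) fun g => by
    obtain ⟨σ, hσ⟩ := hT g
    change (∑ v, V.ρ (T v)) * V.ρ g = V.ρ g * ∑ v, V.ρ (T v)
    simp only [sum_mul, mul_sum, ← map_mul]
    rw [← Equiv.sum_comp σ]
    exact sum_congr rfl fun v _ => by rw [← hσ, inv_mul_cancel_right]
  have htrace : ∑ v, V.character (T v) = c * Module.finrank ℂ V := by
    simpa [FDRep.character, Representation.character] using congrArg (LinearMap.trace ℂ V) hc
  rw [hc, centralChar]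
  simp only [charRatio]
  rw [← sum_div, htrace, mul_div_cancel_right₀ _ (finrank_ne_zero_of_simple V)]

theorem IsConjInvariant.sum_charRatio_mul [Simple V] (hT : IsConjInvariant T) (h : G) :
    ∑ v, charRatio V (h * T v) = charRatio V h * centralChar V T := by
  have hop : ∑ v, V.ρ (h * T v) = centralChar V T • V.ρ h := by
    simp only [map_mul, ← mul_sum, hT.sum_ρ_eq_smul_id]
    exact mul_smul_comm _ _ _
  have htrace : ∑ v, V.character (h * T v) = centralChar V T * V.character h := by
    simpa [FDRep.character, Representation.character] using congrArg (LinearMap.trace ℂ V) hop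
  simp only [charRatio]
  rw [← sum_div, htrace]
  ring

variable {ι : Type} [Fintype ι] {rep : ι → FDRep ℂ G} {P : ι → ℝ} {φ : G → ℂ}

theorem sum_mul_centralChar (hP : ∀ g, ∑ i, (P i : ℂ) * charRatio (rep i) g = φ g) :
    ∑ i, (P i : ℂ) * centralChar (rep i) T = ∑ v, φ (T v) := by
  simp only [centralChar, mul_sum, ← hP]
  exact sum_comm

theorem sum_eq_one_of_charRatio (hsimple : ∀ i, Simple (rep i))
    (hP : ∀ g, ∑ i, (P i : ℂ) * charRatio (rep i) g = φ g) (hφ : φ 1 = 1) :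
    ∑ i, P i = 1 := by
  have h := hP 1
  simp only [charRatio_one (finrank_ne_zero_of_simple _), mul_one, hφ] at h
  exact_mod_cast h

variable [Finite G]

theorem IsConjInvariant.norm_centralChar_sq [Simple V] (hT : IsConjInvariant T) :
    ((‖centralChar V T‖ ^ 2 : ℝ) : ℂ) = ∑ w, ∑ v, charRatio V ((T w)⁻¹ * T v) := by
  simp only [hT.sum_charRatio_mul, charRatio_inv, ← sum_mul, ← map_sum]
  rw [Complex.ofReal_pow, ← Complex.conj_mul', centralChar]

theorem IsConjInvariant.sum_mul_norm_centralChar_sq (hT : IsConjInvariant T)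
    (hsimple : ∀ i, Simple (rep i))
    (hP : ∀ g, ∑ i, (P i : ℂ) * charRatio (rep i) g = φ g) :
    ((∑ i, P i * ‖centralChar (rep i) T‖ ^ 2 : ℝ) : ℂ) = ∑ w, ∑ v, φ ((T w)⁻¹ * T v) := by
  simp only [Complex.ofReal_sum, Complex.ofReal_mul, hT.norm_centralChar_sq, mul_sum, ← hP]
  rw [sum_comm]
  exact sum_congr rfl fun w _ => sum_comm

end CentralCharacters

section TensorChain

theorem tensorChain_nonneg {G ι : Type} [Monoid G] (rep : ι → FDRep ℂ G) (η : FDRep ℂ G)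
    (i j : ι) : 0 ≤ tensorChain rep η i j := by
  unfold tensorChain
  positivity

theorem tensorChain_pow_nonneg {G ι : Type} [Monoid G] [Fintype ι] [DecidableEq ι]
    (rep : ι → FDRep ℂ G) (η : FDRep ℂ G) (r : ℕ) (i j : ι) : 0 ≤ (tensorChain rep η ^ r) i j := by
  induction r generalizing j with
  | zero =>
    rw [pow_zero, Matrix.one_apply]
    split_ifs <;> norm_num
  | succ r ih =>
    rw [pow_succ, Matrix.mul_apply]
    exact sum_nonneg fun k _ => mul_nonneg (ih k) (tensorChain_nonneg rep η k j)

theorem plancherel_nonneg {G ι : Type} [Monoid G] [Fintype G] (rep : ι → FDRep ℂ G) (i : ι) :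
    0 ≤ plancherel rep i := by
  unfold plancherel
  positivity

variable {G ι : Type} [Group G] [Fintype ι] {rep : ι → FDRep ℂ G} {η : FDRep ℂ G}

theorem IsCompleteIrreps.sum_plancherel_mul_charRatio [Fintype G] [DecidableEq G]
    (hrep : IsCompleteIrreps rep) (g : G) :
    ∑ i, (plancherel rep i : ℂ) * charRatio (rep i) g = if g = 1 then 1 else 0 := by
  have hG : (Nat.card G : ℂ) ≠ 0 := NeZero.ne _
  calc ∑ i, (plancherel rep i : ℂ) * charRatio (rep i) g
      = (∑ i, (Module.finrank ℂ (rep i) : ℂ) * (rep i).character g) / Nat.card G := by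
        rw [sum_div]
        refine sum_congr rfl fun i _ => ?_
        have := hrep.simple i
        have := finrank_ne_zero_of_simple (rep i)
        simp only [plancherel, charRatio, Nat.card_eq_fintype_card]
        push_cast
        field_simp
    _ = if g = 1 then 1 else 0 := by
        rw [hrep.sum_finrank_mul_character g, ite_div, div_self hG, zero_div]

theorem IsCompleteIrreps.sum_plancherel_mul_norm_centralChar_sq [Fintype G]
    (hrep : IsCompleteIrreps rep) {κ : Type*} [Fintype κ] {T : κ → G} (hT : IsConjInvariant T) :
    ∑ i, plancherel rep i * ‖centralChar (rep i) T‖ ^ 2 =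
      Nat.card {p : κ × κ // T p.1 = T p.2} := by
  classical
  rw [← Complex.ofReal_inj,
    hT.sum_mul_norm_centralChar_sq hrep.simple hrep.sum_plancherel_mul_charRatio,
    Complex.ofReal_natCast]
  simp only [inv_mul_eq_one, Nat.card_eq_fintype_card, Fintype.card_subtype, card_filter,
    Fintype.sum_prod_type, Nat.cast_sum, Nat.cast_ite, Nat.cast_one, Nat.cast_zero]

theorem IsCompleteIrreps.sum_tensorChain_mul_charRatio [Finite G] (hrep : IsCompleteIrreps rep)
    (l : ι) (g : G) :
    ∑ i, (tensorChain rep η l i : ℂ) * charRatio (rep i) g =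
      charRatio (rep l) g * charRatio η g := by
  have h := hrep.character_eq_sum_multIn (rep l ⊗ η) g
  rw [FDRep.char_tensor, Pi.mul_apply] at h
  rw [charRatio, charRatio, div_mul_div_comm, h, sum_div]
  refine sum_congr rfl fun i _ => ?_
  have := hrep.simple i
  have := finrank_ne_zero_of_simple (rep i)
  simp only [tensorChain, charRatio]
  push_cast
  field_simp

variable [DecidableEq ι]

theorem IsCompleteIrreps.sum_tensorChain_pow_mul_charRatio [Finite G] (hrep : IsCompleteIrreps rep)
    (l : ι) (r : ℕ) (g : G) :
    ∑ i, ((tensorChain rep η ^ r) l i : ℂ) * charRatio (rep i) g =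
      charRatio (rep l) g * charRatio η g ^ r := by
  induction r with
  | zero => simp [Matrix.one_apply, apply_ite Complex.ofReal]
  | succ r ih =>
    simp only [pow_succ, Matrix.mul_apply, Complex.ofReal_sum, Complex.ofReal_mul, sum_mul]
    rw [sum_comm]
    simp only [mul_assoc, ← mul_sum, hrep.sum_tensorChain_mul_charRatio]
    simp only [← mul_assoc, ← sum_mul, ih]

theorem IsCompleteIrreps.one_sub_le_tvDist_tensorChain [Fintype G]
    (hrep : IsCompleteIrreps rep) {triv : ι}
    (htriv : ∀ g, (rep triv).character g = 1) (hη : (Module.finrank ℂ η : ℂ) ≠ 0)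
    {κ : Type*} [Fintype κ] {T : κ → G} (hT : IsConjInvariant T) {r : ℕ} {a b : ℝ}
    (hmean : ∑ v, charRatio η (T v) ^ r ≠ 0)
    (ha : (∑ w, ∑ v, charRatio η ((T w)⁻¹ * T v) ^ r).re ≤
      ‖∑ v, charRatio η (T v) ^ r‖ ^ 2 + a)
    (hb : Nat.card {p : κ × κ // T p.1 = T p.2} ≤ b) :
    1 - 2 * (a + b) / ‖∑ v, charRatio η (T v) ^ r‖ ^ 2 ≤
      tvDist (fun i => (tensorChain rep η ^ r) triv i) (plancherel rep) := by
  classical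
  have hchain (g : G) : ∑ i, ((tensorChain rep η ^ r) triv i : ℂ) * charRatio (rep i) g =
      charRatio η g ^ r := by
    rw [hrep.sum_tensorChain_pow_mul_charRatio, charRatio_of_character_eq_one htriv, one_mul]
  have hsum_chain := sum_eq_one_of_charRatio hrep.simple hchain (by rw [charRatio_one hη, one_pow])
  have hvar : ∑ i, (tensorChain rep η ^ r) triv i *
      dist (centralChar (rep i) T) (∑ v, charRatio η (T v) ^ r) ^ 2 ≤ a := by
    have hsq := congrArg Complex.re (hT.sum_mul_norm_centralChar_sq hrep.simple hchain)
    rw [Complex.ofReal_re] at hsq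
    rw [sum_mul_dist_mean_sq hsum_chain (by simpa using sum_mul_centralChar hchain), hsq]
    linarith
  have hplancherel : ∑ i, plancherel rep i * dist (centralChar (rep i) T) 0 ^ 2 ≤ b := by
    simpa only [dist_zero_right, hrep.sum_plancherel_mul_norm_centralChar_sq hT] using hb
  have hsum_plancherel :=
    sum_eq_one_of_charRatio hrep.simple hrep.sum_plancherel_mul_charRatio (if_pos rfl)
  simpa only [dist_zero_right] using one_sub_le_tvDist
    (tensorChain_pow_nonneg rep η r triv) (plancherel_nonneg rep) hsum_chain
    hsum_plancherel
    (by rwa [dist_zero_right, norm_pos_iff]) hvar hplancherel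

end TensorChain

section LinearAlgebra

theorem card_not_linearIndependent_pair_le (K V : Type*) [Field K] [Finite K] [AddCommGroup V]
    [Module K V] [Finite V] :
    Nat.card {p : V × V // ¬ LinearIndependent K ![p.1, p.2]} ≤
      (Nat.card K + 1) * Nat.card V := by
  let f : Option K × V → V × V := fun x => x.1.elim (0, x.2) fun t => (x.2, t • x.2)
  have hf : ∀ p : {p : V × V // ¬ LinearIndependent K ![p.1, p.2]}, ∃ x, f x = p := by
    rintro ⟨⟨v, w⟩, h⟩
    rcases eq_or_ne v 0 with rfl | hv
    · exact ⟨(none, w), rfl⟩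
    · rw [LinearIndependent.pair_iff' hv, not_forall_not] at h
      obtain ⟨t, rfl⟩ := h
      exact ⟨(some t, v), rfl⟩
  choose s hs using hf
  have hinj : Function.Injective s := fun p p' h => Subtype.ext (by rw [← hs p, h, hs p'])
  exact (Nat.card_le_card_of_injective s hinj).trans_eq
    (by rw [Nat.card_prod, Finite.card_option])

theorem exists_apply_eq_zero_and_apply_ne_zero {K V : Type*} [Field K] [AddCommGroup V]
    [Module K V] {f g : Module.Dual K V} (hfg : LinearIndependent K ![f, g]) :
    ∃ x, f x = 0 ∧ g x ≠ 0 := by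
  by_contra! hker
  have hmem : g ∈ Submodule.span K (Set.range fun _ : Unit => f) :=
    mem_span_of_iInf_ker_le_ker ((iInf_le _ ()).trans hker)
  rw [Set.range_const, Submodule.mem_span_singleton] at hmem
  obtain ⟨t, ht⟩ := hmem
  exact (LinearIndependent.pair_iff' (hfg.ne_zero 0)).mp hfg t ht

theorem two_le_finrank_of_linearIndependent {K V : Type*} [Field K] [AddCommGroup V]
    [Module K V] {p : Submodule K V} [FiniteDimensional K p] {v w : V} (hv : v ∈ p) (hw : w ∈ p)
    (hvw : LinearIndependent K ![v, w]) : 2 ≤ Module.finrank K p := by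
  have hspan : Submodule.span K (Set.range ![v, w]) ≤ p := by
    rw [Submodule.span_le, Set.range_subset_iff, Fin.forall_fin_two]
    exact ⟨hv, hw⟩
  have hfinrank := Submodule.finrank_mono hspan
  rwa [finrank_span_eq_card hvw, Fintype.card_fin] at hfinrank

theorem two_le_finrank_range_smulRight_sub {K V W : Type*} [Field K] [AddCommGroup V]
    [Module K V] [AddCommGroup W] [Module K W] [FiniteDimensional K W]
    {f g : Module.Dual K V} {v w : W}
    (hfg : LinearIndependent K ![f, g]) (hvw : LinearIndependent K ![v, w]) :
    2 ≤ Module.finrank K (LinearMap.range (f.smulRight v - g.smulRight w)) := by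
  obtain ⟨x, hfx, hgx⟩ := exists_apply_eq_zero_and_apply_ne_zero hfg
  have hgf : LinearIndependent K ![g, f] := LinearIndependent.pair_symm_iff.mp hfg
  obtain ⟨y, hgy, hfy⟩ := exists_apply_eq_zero_and_apply_ne_zero hgf
  refine two_le_finrank_of_linearIndependent (LinearMap.mem_range.mpr ⟨(f y)⁻¹ • y, ?_⟩)
    (LinearMap.mem_range.mpr ⟨-(g x)⁻¹ • x, ?_⟩) hvw
  · rw [map_smul, LinearMap.sub_apply, LinearMap.smulRight_apply, LinearMap.smulRight_apply, hgy,
      zero_smul, sub_zero, inv_smul_smul₀ hfy]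
  · rw [map_smul, LinearMap.sub_apply, LinearMap.smulRight_apply, LinearMap.smulRight_apply, hfx,
      zero_smul, zero_sub, neg_smul_neg, inv_smul_smul₀ hgx]

variable {F : Type} [Field F] {m : ℕ}

theorem fixdim_add_rank_sub_one (g : (Matrix (Fin m) (Fin m) F)ˣ) :
    fixdim g + (g.val - 1).rank = m := by
  rw [fixdim, add_comm, Matrix.rank, ← Matrix.toLin'_apply',
    LinearMap.finrank_range_add_finrank_ker, Module.finrank_fin_fun]

theorem rank_inv_mul_sub_one (g h : (Matrix (Fin m) (Fin m) F)ˣ) :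
    ((g⁻¹ * h).val - 1).rank = (h.val - g.val).rank := by
  have hmul : (g⁻¹ * h).val - 1 = g⁻¹.val * (h.val - g.val) := by
    rw [mul_sub, Units.val_mul, Units.inv_mul]
  rw [hmul, Matrix.rank_mul_eq_right_of_isUnit_det _ _
    ((Matrix.isUnit_iff_isUnit_det _).mp g⁻¹.isUnit)]

end LinearAlgebra

section Transvections

open scoped Matrix

variable {F : Type} [Field F] {m : ℕ} {B : LinearMap.BilinForm F (Fin m → F)}

/-- The symplectic transvection `x ↦ x + B(v, x) v` as an element of the isometry group
of `B`. -/
def symplecticTransvection (hB : B.IsAlt) (v : Fin m → F) : formIsometry (fun x y => B x y) where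
  val := Matrix.GeneralLinearGroup.toLin.symm (.ofLinearEquiv (LinearEquiv.transvection (hB v)))
  property x y := by
    change B (LinearMap.toMatrix' (LinearMap.transvection (B v) v) *ᵥ x)
      (LinearMap.toMatrix' (LinearMap.transvection (B v) v) *ᵥ y) = B x y
    simp only [LinearMap.toMatrix'_mulVec, LinearMap.transvection.apply, map_add,
      LinearMap.add_apply, map_smul, LinearMap.smul_apply, smul_eq_mul, hB.self_eq_zero v,
      ← hB.neg_eq v x]
    ring

theorem symplecticTransvection_val (hB : B.IsAlt) (v : Fin m → F) :
    (symplecticTransvection hB v).val.val =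
      LinearMap.toMatrix' (LinearMap.transvection (B v) v) :=
  rfl

theorem symplecticTransvection_mulVec (hB : B.IsAlt) (v x : Fin m → F) :
    (symplecticTransvection hB v).val.val *ᵥ x = x + B v x • v := by
  rw [symplecticTransvection_val, LinearMap.toMatrix'_mulVec, LinearMap.transvection.apply]

theorem conj_symplecticTransvection (hB : B.IsAlt) (g : formIsometry (fun x y => B x y))
    (v : Fin m → F) :
    g * symplecticTransvection hB v * g⁻¹ = symplecticTransvection hB (g.val.val *ᵥ v) := by
  rw [mul_inv_eq_iff_eq_mul]
  refine Subtype.ext (Units.ext (Matrix.ext_of_mulVec_single fun i => ?_))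
  have hg (x : Fin m → F) : B (g.val.val *ᵥ v) (g.val.val *ᵥ x) = B v x := g.2 v x
  simp only [Subgroup.coe_mul, Units.val_mul, ← Matrix.mulVec_mulVec,
    symplecticTransvection_mulVec, hg, Matrix.mulVec_add, Matrix.mulVec_smul]

theorem isConjInvariant_symplecticTransvection (hB : B.IsAlt) :
    IsConjInvariant (symplecticTransvection hB) := fun g =>
  ⟨(Matrix.toLinearEquiv' g.val.val
    (inferInstanceAs (Invertible (g.val : Matrix (Fin m) (Fin m) F)))).toEquiv,
    conj_symplecticTransvection hB g⟩

theorem mulVecLin_symplecticTransvection_sub_one (hB : B.IsAlt) (v : Fin m → F) :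
    ((symplecticTransvection hB v).val.val - 1).mulVecLin = (B v).smulRight v :=
  LinearMap.ext fun x => by
    simp only [Matrix.mulVecLin_apply, Matrix.sub_mulVec, Matrix.one_mulVec,
      symplecticTransvection_mulVec, add_sub_cancel_left, LinearMap.smulRight_apply]

theorem rank_symplecticTransvection_sub_one_le (hB : B.IsAlt) (v : Fin m → F) :
    ((symplecticTransvection hB v).val.val - 1).rank ≤ 1 := by
  have hle : LinearMap.range ((B v).smulRight v) ≤ Submodule.span F {v} := by
    rintro _ ⟨x, rfl⟩
    exact Submodule.smul_mem _ _ (Submodule.mem_span_singleton_self v)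
  rw [Matrix.rank, mulVecLin_symplecticTransvection_sub_one]
  exact (Submodule.finrank_mono hle).trans ((finrank_span_le_card _).trans_eq (by simp))

theorem two_le_rank_symplecticTransvection_sub (hB : B.IsAlt) (hnd : B.SeparatingLeft)
    {v w : Fin m → F} (hvw : LinearIndependent F ![v, w]) :
    2 ≤ ((symplecticTransvection hB v).val.val - (symplecticTransvection hB w).val.val).rank := by
  have hform : LinearIndependent F ![B v, B w] := by
    have hcomp : ![B v, B w] = B ∘ ![v, w] := by
      ext1 i
      fin_cases i <;> rfl
    rw [hcomp]
    exact hvw.map' B (LinearMap.separatingLeft_iff_ker_eq_bot.mp hnd)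
  have hlin : ((symplecticTransvection hB v).val.val -
      (symplecticTransvection hB w).val.val).mulVecLin =
      (B v).smulRight v - (B w).smulRight w :=
    LinearMap.ext fun x => by
      simp only [Matrix.mulVecLin_apply, Matrix.sub_mulVec, symplecticTransvection_mulVec,
        add_sub_add_left_eq_sub, LinearMap.sub_apply, LinearMap.smulRight_apply]
  rw [Matrix.rank, hlin]
  exact two_le_finrank_range_smulRight_sub hform hvw

end Transvections

section WeilCharacter

variable {F : Type} [Field F] {m : ℕ} {H : Subgroup (Matrix (Fin m) (Fin m) F)ˣ}
  {V : FDRep ℂ H} {q : ℂ}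

theorem finrank_eq_pow_of_character_eq_pow_fixdim
    (hV : ∀ g : H, V.character g = q ^ fixdim g.val) : (Module.finrank ℂ V : ℂ) = q ^ m := by
  have hfix : fixdim (1 : (Matrix (Fin m) (Fin m) F)ˣ) = m := by
    simpa using fixdim_add_rank_sub_one (1 : (Matrix (Fin m) (Fin m) F)ˣ)
  rw [← FDRep.char_one, hV, OneMemClass.coe_one, hfix]

theorem charRatio_pow_eq_pow_rank (hq : q ≠ 0)
    (hV : ∀ g : H, V.character g = q ^ fixdim g.val) (r : ℕ) (g : H) :
    charRatio V g ^ r = (q ^ r)⁻¹ ^ (g.val.val - 1).rank := by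
  have hratio : charRatio V g = q⁻¹ ^ (g.val.val - 1).rank := by
    have hdim : q ^ m = q ^ fixdim g.val * q ^ (g.val.val - 1).rank := by
      rw [← pow_add, fixdim_add_rank_sub_one]
    rw [charRatio, hV, finrank_eq_pow_of_character_eq_pow_fixdim hV, hdim, inv_pow,
      div_mul_cancel_left₀ (pow_ne_zero _ hq)]
  rw [hratio, ← inv_pow, pow_right_comm]

end WeilCharacter

section SymplecticLowerBound

variable {F : Type} [Field F] [Fintype F] {m : ℕ} {B : LinearMap.BilinForm F (Fin m → F)}

theorem card_symplecticTransvection_eq_le (hB : B.IsAlt) (hnd : B.SeparatingLeft) :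
    Nat.card {p : (Fin m → F) × (Fin m → F) //
        symplecticTransvection hB p.1 = symplecticTransvection hB p.2} ≤
      (Fintype.card F + 1) * Fintype.card F ^ m := by
  have hdep (p : (Fin m → F) × (Fin m → F))
      (hp : symplecticTransvection hB p.1 = symplecticTransvection hB p.2) :
      ¬ LinearIndependent F ![p.1, p.2] := fun hli => by
    have hrank := two_le_rank_symplecticTransvection_sub hB hnd hli
    rw [hp, sub_self, Matrix.rank_zero] at hrank
    omega
  have hcard := card_not_linearIndependent_pair_le F (Fin m → F)
  rw [Nat.card_fun, Nat.card_eq_fintype_card (α := F), Nat.card_fin] at hcard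
  exact (Nat.card_le_card_of_injective _ (Subtype.impEmbedding _ _ hdep).injective).trans hcard

theorem le_sum_pow_rank_symplecticTransvection_sub_one (hB : B.IsAlt) {u : ℝ} (hu₀ : 0 ≤ u)
    (hu₁ : u ≤ 1) :
    Fintype.card F ^ m * u ≤ ∑ v, u ^ ((symplecticTransvection hB v).val.val - 1).rank :=
  calc Fintype.card F ^ m * u = ∑ _v : Fin m → F, u ^ 1 := by simp
    _ ≤ _ := sum_le_sum fun v _ =>
      pow_le_pow_of_le_one hu₀ hu₁ (rank_symplecticTransvection_sub_one_le hB v)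

theorem sum_pow_rank_symplecticTransvection_sub_le (hB : B.IsAlt) (hnd : B.SeparatingLeft) {u : ℝ}
    (hu₀ : 0 ≤ u) (hu₁ : u ≤ 1) :
    ∑ w, ∑ v, u ^ ((symplecticTransvection hB v).val.val -
        (symplecticTransvection hB w).val.val).rank ≤
      (Fintype.card F ^ m * u) ^ 2 + (Fintype.card F + 1) * Fintype.card F ^ m := by
  classical
  have hpt (v w : Fin m → F) : u ^ ((symplecticTransvection hB v).val.val -
      (symplecticTransvection hB w).val.val).rank ≤
        u ^ 2 + if ¬ LinearIndependent F ![v, w] then 1 else 0 := by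
    split_ifs with h
    · rw [add_zero]
      exact pow_le_pow_of_le_one hu₀ hu₁ (two_le_rank_symplecticTransvection_sub hB hnd h)
    · exact (pow_le_one₀ hu₀ hu₁).trans (le_add_of_nonneg_left (sq_nonneg u))
  have hcard : (∑ p : (Fin m → F) × (Fin m → F),
      if ¬ LinearIndependent F ![p.1, p.2] then (1 : ℝ) else 0) ≤
        (Fintype.card F + 1) * Fintype.card F ^ m := by
    have h := card_not_linearIndependent_pair_le F (Fin m → F)
    rw [Nat.card_fun, Nat.card_eq_fintype_card (α := F), Nat.card_fin, Nat.card_eq_fintype_card,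
      Fintype.card_subtype] at h
    rw [sum_boole]
    exact_mod_cast h
  rw [sum_comm, ← Fintype.sum_prod_type']
  calc _ ≤ ∑ p : (Fin m → F) × (Fin m → F),
        (u ^ 2 + if ¬ LinearIndependent F ![p.1, p.2] then 1 else 0) :=
      sum_le_sum fun p _ => hpt p.1 p.2
    _ = (Fintype.card F ^ m * u) ^ 2 + ∑ p : (Fin m → F) × (Fin m → F),
        if ¬ LinearIndependent F ![p.1, p.2] then (1 : ℝ) else 0 := by
      rw [sum_add_distrib, sum_const, card_univ, Fintype.card_prod, Fintype.card_fun,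
        Fintype.card_fin, nsmul_eq_mul]
      push_cast
      ring
    _ ≤ _ := by gcongr

theorem one_sub_le_tvDist_tensorChain_of_charRatio_pow_eq_pow_rank (hB : B.IsAlt)
    (hnd : B.SeparatingLeft) {ι : Type} [Fintype ι] [DecidableEq ι]
    {rep : ι → FDRep ℂ (formIsometry fun x y => B x y)} (hrep : IsCompleteIrreps rep) {triv : ι}
    (htriv : ∀ g, (rep triv).character g = 1) {η : FDRep ℂ (formIsometry fun x y => B x y)}
    (hdim : (Module.finrank ℂ η : ℂ) ≠ 0) {r : ℕ} {u : ℝ} (hu₀ : 0 < u) (hu₁ : u ≤ 1)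
    (hη : ∀ g : formIsometry fun x y => B x y,
      charRatio η g ^ r = ((u ^ (g.val.val - 1).rank : ℝ) : ℂ)) :
    1 - 4 * (Fintype.card F + 1) / (Fintype.card F ^ m * u ^ 2) ≤
      tvDist (fun i => (tensorChain rep η ^ r) triv i) (plancherel rep) := by
  set μ : ℝ := ∑ v, u ^ ((symplecticTransvection hB v).val.val - 1).rank
  have hμ : ∑ v, charRatio η (symplecticTransvection hB v) ^ r = (μ : ℂ) := by
    simp only [hη, μ, Complex.ofReal_sum]
  have hμ_ge : Fintype.card F ^ m * u ≤ μ :=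
    le_sum_pow_rank_symplecticTransvection_sub_one hB hu₀.le hu₁
  have hμ₀ : 0 < μ := lt_of_lt_of_le (by positivity) hμ_ge
  have hnorm : ‖∑ v, charRatio η (symplecticTransvection hB v) ^ r‖ = μ := by
    rw [hμ, Complex.norm_real, Real.norm_of_nonneg hμ₀.le]
  have hsecond : (∑ w, ∑ v, charRatio η
      ((symplecticTransvection hB w)⁻¹ * symplecticTransvection hB v) ^ r).re ≤
        μ ^ 2 + (Fintype.card F + 1) * Fintype.card F ^ m := by
    simp only [hη, ← Complex.ofReal_sum, Complex.ofReal_re, Subgroup.coe_mul, Subgroup.coe_inv,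
      rank_inv_mul_sub_one]
    exact (sum_pow_rank_symplecticTransvection_sub_le hB hnd hu₀.le hu₁).trans (by gcongr)
  have hcoincide : (Nat.card {p : (Fin m → F) × (Fin m → F) //
      symplecticTransvection hB p.1 = symplecticTransvection hB p.2} : ℝ) ≤
        (Fintype.card F + 1) * Fintype.card F ^ m := by
    exact_mod_cast card_symplecticTransvection_eq_le hB hnd
  have hbound := hrep.one_sub_le_tvDist_tensorChain htriv hdim
    (isConjInvariant_symplecticTransvection hB) (by rw [hμ]; exact_mod_cast hμ₀.ne')
    (by rwa [hnorm]) hcoincide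
  rw [hnorm] at hbound
  refine le_trans (sub_le_sub_left ?_ 1) hbound
  calc _ ≤ 2 * ((Fintype.card F + 1) * Fintype.card F ^ m +
          (Fintype.card F + 1) * Fintype.card F ^ m) / (Fintype.card F ^ m * u) ^ 2 := by gcongr
    _ = 4 * (Fintype.card F + 1) / (Fintype.card F ^ m * u ^ 2) := by
        field_simp
        ring

theorem one_sub_le_tvDist_tensorChain_of_character_eq_pow_fixdim (hB : B.IsAlt)
    (hnd : B.SeparatingLeft) {ι : Type} [Fintype ι] [DecidableEq ι]
    {rep : ι → FDRep ℂ (formIsometry fun x y => B x y)} (hrep : IsCompleteIrreps rep) {triv : ι}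
    (htriv : ∀ g, (rep triv).character g = 1) {η : FDRep ℂ (formIsometry fun x y => B x y)}
    (hη : ∀ g : formIsometry fun x y => B x y,
      η.character g = (Fintype.card F : ℂ) ^ fixdim g.val) (r : ℕ) :
    1 - 4 * (Fintype.card F + 1) * Fintype.card F ^ (2 * r) / Fintype.card F ^ m ≤
      tvDist (fun i => (tensorChain rep η ^ r) triv i) (plancherel rep) := by
  have hq₁ : (1 : ℝ) ≤ Fintype.card F := by exact_mod_cast Fintype.card_pos
  have hq₀ : (Fintype.card F : ℂ) ≠ 0 := NeZero.ne _
  have hdim : (Module.finrank ℂ η : ℂ) ≠ 0 := by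
    rw [finrank_eq_pow_of_character_eq_pow_fixdim hη]
    exact pow_ne_zero _ hq₀
  have hratio (g : formIsometry fun x y => B x y) : charRatio η g ^ r =
      ((((Fintype.card F : ℝ) ^ r)⁻¹ ^ (g.val.val - 1).rank : ℝ) : ℂ) := by
    rw [charRatio_pow_eq_pow_rank hq₀ hη]
    push_cast
    rfl
  refine le_of_eq_of_le ?_ (one_sub_le_tvDist_tensorChain_of_charRatio_pow_eq_pow_rank hB hnd hrep
    htriv hdim (by positivity) (inv_le_one_of_one_le₀ (one_le_pow₀ hq₁)) hratio)
  field_simp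
  ring

end SymplecticLowerBound

theorem mul_pow_div_pow_le_four_mul_pow {q : ℝ} (hq : 2 ≤ q) {k n : ℕ} (hkn : k + 1 ≤ n) :
    4 * (q + 1) * q ^ (2 * (n - (k + 1))) / q ^ (2 * n) ≤ 4 * (1 / 4) ^ k := by
  obtain ⟨d, rfl⟩ := Nat.exists_eq_add_of_le hkn
  have hlin : q + 1 ≤ q ^ 2 := by nlinarith
  have hpow : 1 ≤ ((1 / 4) * q ^ 2) ^ k := one_le_pow₀ (by nlinarith)
  rw [Nat.add_sub_cancel_left, div_le_iff₀ (by positivity)]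
  calc 4 * (q + 1) * q ^ (2 * d) ≤ 4 * q ^ 2 * q ^ (2 * d) * 1 := by
        rw [mul_one]
        gcongr
    _ ≤ 4 * q ^ 2 * q ^ (2 * d) * ((1 / 4) * q ^ 2) ^ k := by gcongr
    _ = 4 * (1 / 4) ^ k * q ^ (2 * (k + 1 + d)) := by ring

theorem sp_even_weil_lower_asymptotic_general {ε : ℝ} (hε : 0 < ε) :
    ∃ c : ℕ, 0 < c ∧ ∀ n : ℕ, c ≤ n → ∀ (F : Type) [Field F] [Fintype F]
      (B : LinearMap.BilinForm F (Fin (2 * n) → F)), B.IsAlt → B.SeparatingLeft →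
      ∀ (ι : Type) [Fintype ι] [DecidableEq ι]
        (rep : ι → FDRep ℂ (formIsometry fun x y => B x y)), IsCompleteIrreps rep →
      ∀ triv : ι, (∀ g, (rep triv).character g = 1) →
      ∀ η : FDRep ℂ (formIsometry fun x y => B x y),
        (∀ g : formIsometry fun x y => B x y,
          η.character g = (Fintype.card F : ℂ) ^ fixdim g.val) →
        1 - ε ≤ tvDist (fun ρ => (tensorChain rep η ^ (n - c)) triv ρ) (plancherel rep) := by
  obtain ⟨k, hk⟩ := exists_pow_lt_of_lt_one (y := (1 / 4 : ℝ)) (div_pos hε four_pos) (by norm_num)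
  refine ⟨k + 1, k.succ_pos, fun n hn F _ _ B hB hnd ι _ _ rep hrep triv htriv η hη => ?_⟩
  have hq : (2 : ℝ) ≤ Fintype.card F := by exact_mod_cast Fintype.one_lt_card (α := F)
  calc 1 - ε ≤ 1 - 4 * (1 / 4) ^ k := by linarith
    _ ≤ _ := sub_le_sub_left (mul_pow_div_pow_le_four_mul_pow hq hn) 1
    _ ≤ _ := one_sub_le_tvDist_tensorChain_of_character_eq_pow_fixdim hB hnd hrep htriv hη _

/-- **Theorem (lower bound for `Sp_{2n}(q)`, `q` even).**  Let `q` be an even prime power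
and, for each `n ≥ 1`, let `G_n = Sp_{2n}(q)` be the isometry group of a nondegenerate
alternating bilinear form on `F_q^{2n}`, and let `η_n` be a complex representation of
`G_n` with character `χ^{η_n}(g) = q^{dim ker(g−1)}` (the linear Weil representation
`τ`).  Let `K^r_𝟙` be the distribution after `r` steps of the tensor product Markov chain
associated with `η_n` started at the trivial representation, and `π` the Plancherel
measure.  Then for every `ε > 0` there is a positive integer `c` (depending only on `ε`)
such that for all sufficiently large `n` and `r = n − c`, `‖K^r_𝟙 − π‖_TV ≥ 1 − ε`. -/
theorem sp_even_weil_lower_asymptotic {q : ℕ} (hq : IsPrimePow q) (hqeven : Even q) :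
    ∀ ε : ℝ, 0 < ε → ∃ c : ℕ, 0 < c ∧ ∃ N : ℕ, ∀ n : ℕ, N ≤ n → 1 ≤ n →
      ∀ (F : Type) [Field F] [Fintype F],
        Fintype.card F = q →
        ∀ B : (Fin (2 * n) → F) → (Fin (2 * n) → F) → F,
          (∀ x x' y, B (x + x') y = B x y + B x' y) →
          (∀ (a : F) (x y : Fin (2 * n) → F), B (a • x) y = a * B x y) →
          (∀ x y y', B x (y + y') = B x y + B x y') →
          (∀ (a : F) (x y : Fin (2 * n) → F), B x (a • y) = a * B x y) →
          (∀ x, B x x = 0) →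
          (∀ x, (∀ y, B x y = 0) → x = 0) →
          ∀ (ι : Type) [Fintype ι] [DecidableEq ι],
            ∀ rep : ι → FDRep ℂ ↥(formIsometry B),
              (∀ i, Simple (rep i)) →
              (∀ V : FDRep ℂ ↥(formIsometry B), Simple V → ∃ i, Nonempty (V ≅ rep i)) →
              (∀ i j : ι, Nonempty (rep i ≅ rep j) → i = j) →
              ∀ triv : ι, (∀ g : ↥(formIsometry B), (rep triv).character g = 1) →
                ∀ η : FDRep ℂ ↥(formIsometry B),
                  (∀ g : ↥(formIsometry B), η.character g =
                    (q : ℂ) ^ fixdim (g : (Matrix (Fin (2 * n)) (Fin (2 * n)) F)ˣ)) →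
                  1 - ε ≤
                    tvDist (fun ρ => (tensorChain rep η ^ (n - c)) triv ρ)
                      (plancherel rep) := by
  intro ε hε
  obtain ⟨c, hc, h⟩ := sp_even_weil_lower_asymptotic_general hε
  exact ⟨c, hc, c, fun n hn _ F _ _ hF B hadd hsmul hadd' hsmul' hB hnd ι _ _ rep hs he hi triv ht η
    hη => h n hn F (LinearMap.mk₂ F B hadd hsmul hadd' hsmul') hB hnd ι rep ⟨hs, he, hi⟩ triv ht η
      (hF ▸ hη)⟩
end
end
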